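/- (Corollary to the corrected theorem) Let I₁,…,I_k, L be compact intervals as above. There exists ε > 0 such that for all A, S ∈ S²(I,L) with A locally affine and ‖S − A‖_{C²} < ε, the maximal invariant Cantor set C_S is not C¹-minimal, i.e., C_S is not the minimal set of any C¹ diffeomorphism of the circle. -/

import Mathlib

/-- A set K in the circle ℝ/ℤ is C¹-minimal if it is a minimal set of some
C¹ diffeomorphism of the circle (given by a C¹ lift F with nonvanishing
derivative satisfying F(x+1) = F(x) ± 1). -/
def IsC1Minimal (K : Set (AddCircle (1 : ℝ))) : Prop :=
  ∃ (F : ℝ → ℝ) (f : AddCircle (1 : ℝ) → AddCircle (1 : ℝ)),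
    ContDiff ℝ 1 F ∧ (∀ x : ℝ, deriv F x ≠ 0) ∧
    (∃ e : ℝ, (e = 1 ∨ e = -1) ∧ ∀ x : ℝ, F (x + 1) = F x + e) ∧
    (∀ x : ℝ, f (x : ℝ) = ((F x : ℝ) : AddCircle (1 : ℝ))) ∧
    IsClosed K ∧ K.Nonempty ∧ f '' K = K ∧
    ∀ x ∈ K, closure {y | ∃ n : ℕ, f^[n] x = y} = K

section Aux

open Set

structure IFS (m : ℕ) where
  c : ℝ
  d : ℝ
  a : Fin (m+1) → ℝ
  b : Fin (m+1) → ℝ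
  φ : Fin (m+1) → ℝ → ℝ
  K : Set ℝ
  hcd : c < d
  hc0 : 0 ≤ c
  hd1 : d < 1
  hKc : IsCompact K
  hcK : c ∈ K
  hdK : d ∈ K
  hK : K ⊆ Icc c d
  hcont : ∀ i, ContinuousOn (φ i) (Icc c d)
  hmono : ∀ i, (StrictMonoOn (φ i) (Icc c d) ∧ φ i c = a i ∧ φ i d = b i) ∨
    (StrictAntiOn (φ i) (Icc c d) ∧ φ i c = b i ∧ φ i d = a i)
  hKeq : K = ⋃ i, φ i '' K
  hord : ∀ j : Fin m, b j.castSucc < a j.succ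

theorem uIcc_image_iff {G : ℝ → ℝ} {s : Set ℝ} (h : StrictMonoOn G s ∨ StrictAntiOn G s)
    {x y z : ℝ} (hx : x ∈ s) (hy : y ∈ s) (hz : z ∈ s) :
    G z ∈ uIcc (G x) (G y) ↔ z ∈ uIcc x y := by
  rcases h with h | h
  · simp only [mem_uIcc, h.le_iff_le hx hz, h.le_iff_le hz hy, h.le_iff_le hy hz,
      h.le_iff_le hz hx]
  · simp only [mem_uIcc, h.le_iff_ge hx hz, h.le_iff_ge hz hy, h.le_iff_ge hy hz,
      h.le_iff_ge hz hx]
    tauto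

def IsGap (X : Set ℝ) (x y : ℝ) : Prop :=
  x ∈ X ∧ y ∈ X ∧ x ≠ y ∧ ∀ z ∈ X, z ∈ uIcc x y → z = x ∨ z = y

theorem IsGap.symm {X : Set ℝ} {x y : ℝ} (h : IsGap X x y) : IsGap X y x :=
  ⟨h.2.1, h.1, h.2.2.1.symm, fun z hz hzz => (h.2.2.2 z hz (by rwa [uIcc_comm])).symm⟩

namespace IFS

variable {m : ℕ} (I : IFS m)

def ph : List (Fin (m+1)) → ℝ → ℝ
  | [], x => x
  | i :: w, x => ph w (I.φ i x)

@[simp] theorem ph_nil (x : ℝ) : I.ph [] x = x := rfl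
theorem ph_cons (i : Fin (m+1)) (w : List (Fin (m+1))) (x : ℝ) :
    I.ph (i :: w) x = I.ph w (I.φ i x) := rfl

theorem ph_append (u w : List (Fin (m+1))) (x : ℝ) :
    I.ph (u ++ w) x = I.ph w (I.ph u x) := by
  induction u generalizing x with
  | nil => rfl
  | cons i u ih => simp only [List.cons_append, ph_cons, ih]

theorem c_mem : I.c ∈ Icc I.c I.d := ⟨le_refl _, I.hcd.le⟩
theorem d_mem : I.d ∈ Icc I.c I.d := ⟨I.hcd.le, le_refl _⟩

theorem φK {i : Fin (m+1)} {x : ℝ} (hx : x ∈ I.K) : I.φ i x ∈ I.K := by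
  rw [I.hKeq]; exact mem_iUnion.2 ⟨i, mem_image_of_mem _ hx⟩

theorem aK (i : Fin (m+1)) : I.a i ∈ I.K := by
  rcases I.hmono i with ⟨_, h, h'⟩ | ⟨_, h, h'⟩
  · rw [← h]; exact I.φK I.hcK
  · rw [← h']; exact I.φK I.hdK

theorem bK (i : Fin (m+1)) : I.b i ∈ I.K := by
  rcases I.hmono i with ⟨_, h, h'⟩ | ⟨_, h, h'⟩
  · rw [← h']; exact I.φK I.hdK
  · rw [← h]; exact I.φK I.hcK

theorem φ_mono (i : Fin (m+1)) :
    StrictMonoOn (I.φ i) (Icc I.c I.d) ∨ StrictAntiOn (I.φ i) (Icc I.c I.d) := by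
  rcases I.hmono i with h | h
  · exact Or.inl h.1
  · exact Or.inr h.1

theorem φ_mem {i : Fin (m+1)} {x : ℝ} (hx : x ∈ Icc I.c I.d) :
    I.φ i x ∈ Icc (I.a i) (I.b i) := by
  rcases I.hmono i with ⟨h0, h, h'⟩ | ⟨h0, h, h'⟩
  · rw [← h, ← h']
    exact ⟨h0.monotoneOn I.c_mem hx hx.1, h0.monotoneOn hx I.d_mem hx.2⟩
  · rw [← h, ← h']
    exact ⟨h0.antitoneOn hx I.d_mem hx.2, h0.antitoneOn I.c_mem hx hx.1⟩

theorem a_lt_b (i : Fin (m+1)) : I.a i < I.b i := by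
  rcases I.hmono i with ⟨h0, h, h'⟩ | ⟨h0, h, h'⟩
  · rw [← h, ← h']; exact h0 I.c_mem I.d_mem I.hcd
  · rw [← h, ← h']; exact h0 I.c_mem I.d_mem I.hcd

theorem φ_maps {i : Fin (m+1)} {x : ℝ} (hx : x ∈ Icc I.c I.d) : I.φ i x ∈ Icc I.c I.d :=
  ⟨(I.hK (I.aK i)).1.trans (I.φ_mem hx).1, (I.φ_mem hx).2.trans (I.hK (I.bK i)).2⟩

theorem a_mono : StrictMono I.a :=
  Fin.strictMono_iff_lt_succ.2 fun j => (I.a_lt_b _).trans (I.hord j)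

theorem b_lt_a {i i' : Fin (m+1)} (h : i < i') : I.b i < I.a i' := by
  have hi : (i : ℕ) < m := by have := i'.2; have : (i:ℕ) < i' := h; omega
  have h1 := I.hord ⟨i, hi⟩
  have h2 : (⟨i, hi⟩ : Fin m).castSucc = i := rfl
  rw [h2] at h1
  refine h1.trans_le (I.a_mono.monotone ?_)
  rw [Fin.le_def]; simpa using h

theorem piece_unique {i i' : Fin (m+1)} {x : ℝ} (h : x ∈ Icc (I.a i) (I.b i))
    (h' : x ∈ Icc (I.a i') (I.b i')) : i = i' := by
  rcases lt_trichotomy i i' with h0 | h0 | h0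
  · have := I.b_lt_a h0; linarith [h.2, h'.1]
  · exact h0
  · have := I.b_lt_a h0; linarith [h.1, h'.2]

theorem K_piece {x : ℝ} (hx : x ∈ I.K) : ∃ i, ∃ y ∈ I.K, I.φ i y = x := by
  rw [I.hKeq] at hx
  obtain ⟨i, y, hy, h⟩ := mem_iUnion.1 hx
  exact ⟨i, y, hy, h⟩

theorem ph_maps (w : List (Fin (m+1))) {x : ℝ} (hx : x ∈ Icc I.c I.d) :
    I.ph w x ∈ Icc I.c I.d := by
  induction w generalizing x with
  | nil => exact hx
  | cons i w ih => exact ih (I.φ_maps hx)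

theorem phK (w : List (Fin (m+1))) {x : ℝ} (hx : x ∈ I.K) : I.ph w x ∈ I.K := by
  induction w generalizing x with
  | nil => exact hx
  | cons i w ih => exact ih (I.φK hx)

theorem ph_mono (w : List (Fin (m+1))) :
    StrictMonoOn (I.ph w) (Icc I.c I.d) ∨ StrictAntiOn (I.ph w) (Icc I.c I.d) := by
  induction w with
  | nil => exact Or.inl fun x _ y _ h => h
  | cons i w ih =>
    rcases ih with ih | ih <;> rcases I.φ_mono i with h | h
    · exact Or.inl fun x hx y hy hxy => ih (I.φ_maps hx) (I.φ_maps hy) (h hx hy hxy)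
    · exact Or.inr fun x hx y hy hxy => ih (I.φ_maps hy) (I.φ_maps hx) (h hx hy hxy)
    · exact Or.inr fun x hx y hy hxy => ih (I.φ_maps hx) (I.φ_maps hy) (h hx hy hxy)
    · exact Or.inl fun x hx y hy hxy => ih (I.φ_maps hy) (I.φ_maps hx) (h hx hy hxy)

theorem ph_inj (w : List (Fin (m+1))) : InjOn (I.ph w) (Icc I.c I.d) := by
  rcases I.ph_mono w with h | h
  · exact h.injOn
  · exact h.injOn

theorem ph_cont (w : List (Fin (m+1))) : ContinuousOn (I.ph w) (Icc I.c I.d) := by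
  induction w with
  | nil => exact continuousOn_id
  | cons i w ih => exact ih.comp (I.hcont i) fun x hx => I.φ_maps hx

def cyl (w : List (Fin (m+1))) : Set ℝ := I.ph w '' I.K

theorem cyl_nil : I.cyl [] = I.K := image_id I.K

theorem cyl_sub (w : List (Fin (m+1))) : I.cyl w ⊆ I.K := by
  rintro _ ⟨x, hx, rfl⟩; exact I.phK w hx

theorem cyl_append_sub (u w : List (Fin (m+1))) : I.cyl (u ++ w) ⊆ I.cyl w := by
  rintro _ ⟨x, hx, rfl⟩
  rw [ph_append]; exact ⟨_, I.phK u hx, rfl⟩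

theorem cyl_child {w : List (Fin (m+1))} {x : ℝ} (hx : x ∈ I.cyl w) : ∃ i, x ∈ I.cyl (i :: w) := by
  obtain ⟨y, hy, rfl⟩ := hx
  obtain ⟨i, z, hz, rfl⟩ := I.K_piece hy
  exact ⟨i, z, hz, rfl⟩

theorem cyl_len (D : ℕ) {x : ℝ} (hx : x ∈ I.K) : ∃ w, w.length = D ∧ x ∈ I.cyl w := by
  induction D with
  | zero => exact ⟨[], rfl, by rwa [cyl_nil]⟩
  | succ n ih =>
    obtain ⟨w, hw, h⟩ := ih
    obtain ⟨i, hi⟩ := I.cyl_child h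
    exact ⟨i :: w, by simp [hw], hi⟩

theorem cyl_unique {w w' : List (Fin (m+1))} (hl : w.length = w'.length) {x : ℝ}
    (h : x ∈ I.cyl w) (h' : x ∈ I.cyl w') : w = w' := by
  induction w generalizing w' with
  | nil => exact (List.length_eq_zero_iff.1 (by simpa using hl.symm)).symm
  | cons i w ih =>
    cases w' with
    | nil => simp at hl
    | cons i' w' =>
      have e : w = w' := ih (by simpa using hl) (I.cyl_append_sub [i] w h)
        (I.cyl_append_sub [i'] w' h')
      subst e
      obtain ⟨y, hy, rfl⟩ := h
      obtain ⟨z, hz, hzz⟩ := h'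
      rw [ph_cons, ph_cons] at hzz
      have := I.ph_inj w (I.φ_maps (I.hK hz)) (I.φ_maps (I.hK hy)) hzz
      have e2 : i = i' := I.piece_unique (I.φ_mem (I.hK hy)) (this ▸ I.φ_mem (I.hK hz))
      rw [e2]

theorem cyl_convex {w : List (Fin (m+1))} {x y z : ℝ} (hx : x ∈ I.cyl w) (hy : y ∈ I.cyl w)
    (hz : z ∈ I.K) (h : z ∈ uIcc x y) : z ∈ I.cyl w := by
  induction w with
  | nil => rwa [cyl_nil]
  | cons i w ih =>
    obtain ⟨z', hz', rfl⟩ := ih (I.cyl_append_sub [i] w hx) (I.cyl_append_sub [i] w hy)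
    obtain ⟨x', hx', rfl⟩ := hx
    obtain ⟨y', hy', rfl⟩ := hy
    rw [ph_cons, ph_cons, uIcc_image_iff (I.ph_mono w) (I.φ_maps (I.hK hx'))
      (I.φ_maps (I.hK hy')) (I.hK hz')] at h
    have h1 : z' ∈ Icc (I.a i) (I.b i) :=
      (uIcc_subset_Icc (I.φ_mem (I.hK hx')) (I.φ_mem (I.hK hy'))) h
    obtain ⟨i', z'', hz'', rfl⟩ := I.K_piece hz'
    have := I.piece_unique h1 (I.φ_mem (I.hK hz''))
    subst this
    exact ⟨z'', hz'', rfl⟩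

/-- endpoints of the gap labelled `(w,j)` -/
def Bp (w : List (Fin (m+1))) (j : Fin m) : ℝ := I.ph w (I.b j.castSucc)
def Ap (w : List (Fin (m+1))) (j : Fin m) : ℝ := I.ph w (I.a j.succ)

theorem Bp_mem (w : List (Fin (m+1))) (j : Fin m) : I.Bp w j ∈ I.cyl w := ⟨_, I.bK _, rfl⟩
theorem Ap_mem (w : List (Fin (m+1))) (j : Fin m) : I.Ap w j ∈ I.cyl w := ⟨_, I.aK _, rfl⟩

theorem Bp_ne_Ap (w : List (Fin (m+1))) (j : Fin m) : I.Bp w j ≠ I.Ap w j := fun h =>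
  (I.hord j).ne (I.ph_inj w (I.hK (I.bK _)) (I.hK (I.aK _)) h)

theorem Bp_append (u w : List (Fin (m+1))) (j : Fin m) :
    I.Bp (u ++ w) j = I.ph w (I.Bp u j) := by simp [Bp, ph_append]
theorem Ap_append (u w : List (Fin (m+1))) (j : Fin m) :
    I.Ap (u ++ w) j = I.ph w (I.Ap u j) := by simp [Ap, ph_append]

/-- two points of a cylinder in different children see a basic gap in between -/
theorem split {w : List (Fin (m+1))} {x y : ℝ} (hx : x ∈ I.cyl w) (hy : y ∈ I.cyl w)
    (h : ∀ i, ¬ (x ∈ I.cyl (i :: w) ∧ y ∈ I.cyl (i :: w))) :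
    ∃ j, I.Bp w j ∈ uIcc x y ∧ I.Ap w j ∈ uIcc x y := by
  obtain ⟨i, x', hx', rfl⟩ := I.cyl_child hx
  obtain ⟨i', y', hy', rfl⟩ := I.cyl_child hy
  wlog hii : i < i' generalizing i i' x' y'
  · have hne : i ≠ i' := by
      rintro rfl
      exact h i ⟨⟨_, hx', rfl⟩, ⟨_, hy', rfl⟩⟩
    obtain ⟨j, h1, h2⟩ := this i' y' hy' hy i x' hx' hx (fun i h' => h i ⟨h'.2, h'.1⟩)
      (lt_of_le_of_ne (not_lt.1 hii) hne.symm)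
    exact ⟨j, by rwa [uIcc_comm], by rwa [uIcc_comm]⟩
  have hi : (i : ℕ) < m := by have := i'.2; have : (i:ℕ) < i' := hii; omega
  refine ⟨⟨i, hi⟩, ?_⟩
  have e : (⟨i, hi⟩ : Fin m).castSucc = i := rfl
  have hxm := I.φ_mem (i := i) (I.hK hx')
  have hym := I.φ_mem (i := i') (I.hK hy')
  have h1 := I.hord ⟨i, hi⟩
  have h2 : I.a (⟨i, hi⟩ : Fin m).succ ≤ I.a i' := by
    apply I.a_mono.monotone
    rw [Fin.le_def]; simpa using hii
  rw [e] at h1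
  unfold Bp Ap
  rw [ph_cons, ph_cons, uIcc_image_iff (I.ph_mono w) (I.φ_maps (I.hK hx'))
      (I.φ_maps (I.hK hy')) (I.hK (I.bK _)), uIcc_image_iff (I.ph_mono w) (I.φ_maps (I.hK hx'))
      (I.φ_maps (I.hK hy')) (I.hK (I.aK _)), e, mem_uIcc, mem_uIcc]
  exact ⟨Or.inl ⟨hxm.2, by linarith [hym.1]⟩, Or.inl ⟨by linarith [hxm.2], by linarith [hym.1]⟩⟩

/-- suffix lemma -/
theorem suffix {w q : List (Fin (m+1))} {j : Fin m} (hB : I.Bp w j ∈ I.cyl q)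
    (hA : I.Ap w j ∈ I.cyl q) : ∃ u, w = u ++ q := by
  induction q using List.reverseRecOn generalizing w with
  | nil => exact ⟨w, by simp⟩
  | append_singleton q i ih =>
    rcases List.eq_nil_or_concat' w with rfl | ⟨w', i', rfl⟩
    · obtain ⟨y, hy, hyy⟩ := hB
      obtain ⟨z, hz, hzz⟩ := hA
      rw [ph_append] at hyy hzz
      have h1 := I.φ_mem (i := i) (I.ph_maps q (I.hK hy))
      have h2 := I.φ_mem (i := i) (I.ph_maps q (I.hK hz))
      simp only [ph_cons, ph_nil, Bp, Ap] at hyy hzz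
      rw [hyy] at h1
      rw [hzz] at h2
      have e1 := I.piece_unique h1 ⟨(I.a_lt_b _).le, le_refl _⟩
      have e2 := I.piece_unique h2 ⟨le_refl _, (I.a_lt_b _).le⟩
      have := e1.symm.trans e2
      exact absurd this (Fin.castSucc_lt_succ (i := j)).ne
    · have key : ∀ x ∈ I.K, I.ph (w' ++ [i']) x ∈ I.cyl (q ++ [i]) →
          i' = i ∧ I.ph w' x ∈ I.cyl q := by
        rintro x hx ⟨y, hy, hyy⟩
        rw [ph_append, ph_append] at hyy
        simp only [ph_cons, ph_nil] at hyy
        have h1 := I.φ_mem (i := i) (I.ph_maps q (I.hK hy))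
        rw [hyy] at h1
        have e := I.piece_unique (I.φ_mem (I.ph_maps w' (I.hK hx))) h1
        subst e
        have := I.ph_inj [i'] (I.ph_maps q (I.hK hy)) (I.ph_maps w' (I.hK hx)) hyy
        exact ⟨rfl, ⟨y, hy, this⟩⟩
      have k1 := key _ (I.bK _) hB
      have k2 := key _ (I.aK _) hA
      obtain ⟨u, hu⟩ := ih k1.2 k2.2
      exact ⟨u, by rw [hu, k1.1]; simp⟩

theorem cyl_compl_compact (w : List (Fin (m+1))) : IsCompact (I.K \ I.cyl w) := by
  induction w with
  | nil => rw [cyl_nil]; simp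
  | cons i w ih =>
    have h1 : IsCompact (⋃ k0 ∈ {k0 | k0 ≠ i}, I.φ k0 '' I.K) := by
      apply Set.Finite.isCompact_biUnion (Set.toFinite _)
      intro i' _
      exact I.hKc.image_of_continuousOn ((I.hcont i').mono I.hK)
    have h1s : (⋃ k0 ∈ {k0 | k0 ≠ i}, I.φ k0 '' I.K) ⊆ I.K := by
      intro x hx
      simp only [mem_iUnion] at hx
      obtain ⟨i', _, y, hy, rfl⟩ := hx
      exact I.φK hy
    have h2 := h1.image_of_continuousOn ((I.ph_cont w).mono (h1s.trans I.hK))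
    convert ih.union h2 using 1
    ext x
    constructor
    · rintro ⟨hx, hn⟩
      by_cases hxw : x ∈ I.cyl w
      · right
        obtain ⟨i', y, hy, rfl⟩ := I.cyl_child hxw
        refine ⟨I.φ i' y, ?_, rfl⟩
        simp only [mem_iUnion]
        refine ⟨i', ?_, y, hy, rfl⟩
        rintro rfl
        exact hn ⟨y, hy, rfl⟩
      · exact Or.inl ⟨hx, hxw⟩
    · rintro (⟨hx, hn⟩ | ⟨y, hy, rfl⟩)
      · exact ⟨hx, fun h => hn (I.cyl_append_sub [i] w h)⟩
      · refine ⟨I.phK w (h1s hy), ?_⟩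
        simp only [mem_iUnion] at hy
        obtain ⟨i', hi', z, hz, rfl⟩ := hy
        intro h
        have := I.cyl_unique (w := i' :: w) (w' := i :: w) (by simp) ⟨z, hz, rfl⟩ h
        simp at this
        exact hi' this

theorem cyl_open (w : List (Fin (m+1))) {z : ℝ} (hz : z ∈ I.cyl w) :
    ∃ η > 0, ∀ y ∈ I.K, |y - z| < η → y ∈ I.cyl w := by
  have h := (I.cyl_compl_compact w).isClosed.isOpen_compl
  obtain ⟨η, hη, h'⟩ := Metric.isOpen_iff.1 h z (fun h => h.2 hz)
  refine ⟨η, hη, fun y hy hyz => ?_⟩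
  by_contra hn
  exact h' (show y ∈ Metric.ball z η by rwa [Metric.mem_ball, Real.dist_eq]) ⟨hy, hn⟩

end IFS

open Set

namespace IFS

variable {m : ℕ} (I : IFS m)

def Kt : Set ℝ := {x | ∃ n : ℤ, x + n ∈ I.K}

structure CM (F : ℝ → ℝ) : Prop where
  cont : Continuous F
  mono : StrictMono F ∨ StrictAnti F
  surj : Function.Surjective F
  kt : ∀ x, F x ∈ I.Kt ↔ x ∈ I.Kt
  per : ∀ n : ℤ, ∃ n' : ℤ, ∀ x, F (x + n) = F x + n'

theorem CM_id : I.CM id :=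
  ⟨continuous_id, Or.inl strictMono_id, Function.surjective_id, fun _ => Iff.rfl,
    fun n => ⟨n, fun _ => rfl⟩⟩

variable {I}

theorem CM.comp {F G : ℝ → ℝ} (hF : I.CM F) (hG : I.CM G) : I.CM (F ∘ G) := by
  refine ⟨hF.cont.comp hG.cont, ?_, hF.surj.comp hG.surj, fun x => (hF.kt _).trans (hG.kt _), ?_⟩
  · rcases hF.mono with h | h <;> rcases hG.mono with h' | h'
    · exact Or.inl (h.comp h')
    · exact Or.inr (h.comp_strictAnti h')
    · exact Or.inr (h.comp_strictMono h')
    · exact Or.inl (h.comp h')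
  · intro n
    obtain ⟨n', hn'⟩ := hG.per n
    obtain ⟨n'', hn''⟩ := hF.per n'
    exact ⟨n'', fun x => by simp [hn', hn'']⟩

theorem CM.iter {F : ℝ → ℝ} (hF : I.CM F) (i : ℕ) : I.CM (F^[i]) := by
  induction i with
  | zero => exact I.CM_id
  | succ n ih => rw [Function.iterate_succ']; exact hF.comp ih

theorem CM.monoOn {F : ℝ → ℝ} (hF : I.CM F) :
    StrictMonoOn F univ ∨ StrictAntiOn F univ := by
  rcases hF.mono with h | h
  · exact Or.inl (h.strictMonoOn _)
  · exact Or.inr (h.strictAntiOn _)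

theorem CM.uIcc {F : ℝ → ℝ} (hF : I.CM F) {x y z : ℝ} :
    F z ∈ uIcc (F x) (F y) ↔ z ∈ Set.uIcc x y :=
  uIcc_image_iff hF.monoOn (mem_univ _) (mem_univ _) (mem_univ _)

theorem CM.inj {F : ℝ → ℝ} (hF : I.CM F) : Function.Injective F := by
  rcases hF.mono with h | h
  · exact h.injective
  · exact h.injective

theorem CM.gap {F : ℝ → ℝ} (hF : I.CM F) {x y : ℝ} (h : IsGap I.Kt x y) :
    IsGap I.Kt (F x) (F y) := by
  refine ⟨(hF.kt _).2 h.1, (hF.kt _).2 h.2.1, fun e => h.2.2.1 (hF.inj e), ?_⟩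
  intro z hz hzz
  obtain ⟨z, rfl⟩ := hF.surj z
  rcases h.2.2.2 z ((hF.kt _).1 hz) (hF.uIcc.1 hzz) with rfl | rfl
  · exact Or.inl rfl
  · exact Or.inr rfl

theorem CM.gap_inv {F : ℝ → ℝ} (hF : I.CM F) {x y : ℝ} (h : IsGap I.Kt (F x) (F y)) :
    IsGap I.Kt x y := by
  refine ⟨(hF.kt _).1 h.1, (hF.kt _).1 h.2.1, fun e => h.2.2.1 (by rw [e]), ?_⟩
  intro z hz hzz
  rcases h.2.2.2 (F z) ((hF.kt _).2 hz) (hF.uIcc.2 hzz) with e | e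
  · exact Or.inl (hF.inj e)
  · exact Or.inr (hF.inj e)

variable (I)

theorem K_sub_Kt : I.K ⊆ I.Kt := fun x hx => ⟨0, by simpa using hx⟩

theorem Kt_shift {x : ℝ} (n : ℤ) : x + n ∈ I.Kt ↔ x ∈ I.Kt := by
  constructor
  · rintro ⟨k, hk⟩; exact ⟨n + k, by push_cast; rwa [← add_assoc]⟩
  · rintro ⟨k, hk⟩; exact ⟨k - n, by push_cast; convert hk using 1; ring⟩

theorem int_eq {x : ℝ} {n n' : ℤ} (h : x + n ∈ Icc I.c I.d) (h' : x + n' ∈ Icc I.c I.d) :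
    n = n' := by
  have := I.hc0
  have := I.hd1
  have h1 : ((n - n' : ℤ) : ℝ) < 1 := by push_cast; linarith [h.2, h'.1]
  have h2 : ((n' - n : ℤ) : ℝ) < 1 := by push_cast; linarith [h.1, h'.2]
  have h1' : n - n' < 1 := by exact_mod_cast h1
  have h2' : n' - n < 1 := by exact_mod_cast h2
  omega

theorem Kt_Icc {x : ℝ} (hx : x ∈ I.Kt) (h : x ∈ Icc I.c I.d) : x ∈ I.K := by
  obtain ⟨n, hn⟩ := hx
  have : n = 0 := I.int_eq (x := x) (I.hK hn) (by simpa using h)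
  subst this; simpa using hn

theorem gap_K_Kt {x y : ℝ} (h : IsGap I.K x y) : IsGap I.Kt x y :=
  ⟨I.K_sub_Kt h.1, I.K_sub_Kt h.2.1, h.2.2.1, fun z hz hzz =>
    h.2.2.2 z (I.Kt_Icc hz (uIcc_subset_Icc (I.hK h.1) (I.hK h.2.1) hzz)) hzz⟩

theorem gap_Kt_K {x y : ℝ} (h : IsGap I.Kt x y) (hx : x ∈ I.K) (hy : y ∈ I.K) : IsGap I.K x y :=
  ⟨hx, hy, h.2.2.1, fun z hz hzz => h.2.2.2 z (I.K_sub_Kt hz) hzz⟩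

theorem CM_add (n : ℤ) : I.CM (fun x => x + n) :=
  ⟨by fun_prop, Or.inl fun x y h => by simpa using h, fun y => ⟨y - n, by simp⟩,
    fun x => I.Kt_shift n, fun k => ⟨k, fun x => by ring⟩⟩

def Lab (w : List (Fin (m+1))) (j : Fin m) (x y : ℝ) : Prop :=
  (x = I.Bp w j ∧ y = I.Ap w j) ∨ (x = I.Ap w j ∧ y = I.Bp w j)

def LabZ (w : List (Fin (m+1))) (j : Fin m) (x y : ℝ) : Prop :=
  ∃ n : ℤ, I.Lab w j (x + n) (y + n)

variable {I}
theorem LabZ.symm {w : List (Fin (m+1))} {j : Fin m} {x y : ℝ} (h : I.LabZ w j x y) :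
    I.LabZ w j y x := by
  obtain ⟨n, h⟩ := h
  exact ⟨n, by unfold Lab at *; tauto⟩

theorem LabZ.shift {w : List (Fin (m+1))} {j : Fin m} {x y : ℝ} (k : ℤ) (h : I.LabZ w j x y) :
    I.LabZ w j (x + k) (y + k) := by
  obtain ⟨n, h⟩ := h
  refine ⟨n - k, ?_⟩
  push_cast
  convert h using 1 <;> ring

/-- transport of labels through a circle map -/
theorem CM.lab {F : ℝ → ℝ} (hF : I.CM F) {w w' : List (Fin (m+1))} {j j' : Fin m} {x y : ℝ}
    (h : I.LabZ w j x y) (h' : I.LabZ w' j' (F x) (F y)) :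
    I.LabZ w' j' (F (I.Bp w j)) (F (I.Ap w j)) := by
  obtain ⟨n, h⟩ := h
  obtain ⟨k, hk⟩ := hF.per n
  rcases h with ⟨h1, h2⟩ | ⟨h1, h2⟩
  · rw [← h1, ← h2, hk, hk]; exact h'.shift k
  · rw [← h1, ← h2, hk, hk]; exact h'.symm.shift k
variable (I)

theorem lab_self (w : List (Fin (m+1))) (j : Fin m) : I.LabZ w j (I.Bp w j) (I.Ap w j) :=
  ⟨0, Or.inl ⟨by simp, by simp⟩⟩

theorem gap_lab (w : List (Fin (m+1))) (j : Fin m) : IsGap I.K (I.Bp w j) (I.Ap w j) := by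
  refine ⟨I.cyl_sub _ (I.Bp_mem w j), I.cyl_sub _ (I.Ap_mem w j), I.Bp_ne_Ap w j, ?_⟩
  intro z hz hzz
  obtain ⟨z', hz', rfl⟩ := I.cyl_convex (I.Bp_mem w j) (I.Ap_mem w j) hz hzz
  unfold Bp Ap at *
  rw [uIcc_image_iff (I.ph_mono w) (I.hK (I.bK _)) (I.hK (I.aK _)) (I.hK hz'),
    uIcc_of_le (I.hord j).le] at hzz
  obtain ⟨i, y, hy, rfl⟩ := I.K_piece hz'
  have h := I.φ_mem (i := i) (I.hK hy)
  rcases lt_trichotomy i j.castSucc with h0 | h0 | h0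
  · have := I.b_lt_a h0
    have := I.a_lt_b j.castSucc
    linarith [hzz.1, h.2]
  · left; subst h0; rw [le_antisymm h.2 hzz.1]
  · right
    have : j.succ ≤ i := by
      have h1 : ((j.castSucc : Fin (m+1)) : ℕ) < i := h0
      rw [Fin.le_def]; simpa using h1
    have := I.a_mono.monotone this
    rw [le_antisymm hzz.2 (this.trans h.1)]

theorem LabZ_gap {w : List (Fin (m+1))} {j : Fin m} {x y : ℝ} (h : I.LabZ w j x y) :
    IsGap I.Kt x y := by
  obtain ⟨n, h⟩ := h
  apply (I.CM_add n).gap_inv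
  rcases h with ⟨h1, h2⟩ | ⟨h1, h2⟩
  · simp only [h1, h2]; exact I.gap_K_Kt (I.gap_lab w j)
  · simp only [h1, h2]; exact (I.gap_K_Kt (I.gap_lab w j)).symm

/-- label of a gap seen inside a cylinder has that cylinder as suffix -/
theorem LabZ_suffix {w q : List (Fin (m+1))} {j : Fin m} {x y : ℝ} (h : I.LabZ w j x y) {n : ℤ}
    (hx : x + n ∈ I.cyl q) (hy : y + n ∈ I.cyl q) :
    (∃ u, w = u ++ q) ∧ I.Lab w j (x + n) (y + n) := by
  obtain ⟨n', h⟩ := h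
  have hh : x + n' ∈ I.K := by
    rcases h with ⟨h1, _⟩ | ⟨h1, _⟩
    · rw [h1]; exact I.cyl_sub _ (I.Bp_mem w j)
    · rw [h1]; exact I.cyl_sub _ (I.Ap_mem w j)
  have := I.int_eq (I.hK (I.cyl_sub _ hx)) (I.hK hh)
  subst this
  refine ⟨?_, h⟩
  rcases h with ⟨h1, h2⟩ | ⟨h1, h2⟩
  · rw [h1] at hx; rw [h2] at hy; exact I.suffix hx hy
  · rw [h1] at hx; rw [h2] at hy; exact I.suffix hy hx

theorem lab_unique {w w' : List (Fin (m+1))} {j j' : Fin m} {x y : ℝ}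
    (h : I.LabZ w j x y) (h' : I.LabZ w' j' x y) : w = w' ∧ j = j' := by
  have key : ∀ {w w' : List (Fin (m+1))} {j j' : Fin m} {x y : ℝ},
    I.LabZ w j x y → I.LabZ w' j' x y → ∃ u, w = u ++ w' := by
    intro w w' j j' x y h h'
    obtain ⟨n', h'⟩ := h'
    have h2 : x + n' ∈ I.cyl w' ∧ y + n' ∈ I.cyl w' := by
      rcases h' with ⟨h1, h2⟩ | ⟨h1, h2⟩
      · rw [h1, h2]; exact ⟨I.Bp_mem _ _, I.Ap_mem _ _⟩
      · rw [h1, h2]; exact ⟨I.Ap_mem _ _, I.Bp_mem _ _⟩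
    exact (I.LabZ_suffix h h2.1 h2.2).1
  have hw : w = w' := by
    obtain ⟨u, hu⟩ := key h h'
    obtain ⟨u', hu'⟩ := key h' h
    have e1 := congrArg List.length hu
    have e2 := congrArg List.length hu'
    simp only [List.length_append] at e1 e2
    have : u = [] := List.length_eq_zero_iff.1 (by omega)
    simpa [this] using hu
  subst hw
  refine ⟨rfl, ?_⟩
  obtain ⟨n', h'⟩ := h'
  have h2 : x + n' ∈ I.cyl w ∧ y + n' ∈ I.cyl w := by
    rcases h' with ⟨h1, h2⟩ | ⟨h1, h2⟩
    · rw [h1, h2]; exact ⟨I.Bp_mem _ _, I.Ap_mem _ _⟩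
    · rw [h1, h2]; exact ⟨I.Ap_mem _ _, I.Bp_mem _ _⟩
  have h3 := (I.LabZ_suffix h h2.1 h2.2).2
  have hbb : ∀ {j j' : Fin m}, I.b j.castSucc = I.b j'.castSucc → j = j' := by
    intro j j' e
    have := I.piece_unique (i := j.castSucc) (i' := j'.castSucc) (x := I.b j.castSucc)
      ⟨(I.a_lt_b _).le, le_refl _⟩ (by rw [e]; exact ⟨(I.a_lt_b _).le, le_refl _⟩)
    simpa using this
  unfold Lab Bp Ap at h3 h'
  rcases h3 with ⟨h1, h2⟩ | ⟨h1, h2⟩ <;> rcases h' with ⟨h1', h2'⟩ | ⟨h1', h2'⟩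
  · exact hbb (I.ph_inj w (I.hK (I.bK _)) (I.hK (I.bK _)) (h1.symm.trans h1'))
  · have e1 := I.ph_inj w (I.hK (I.bK _)) (I.hK (I.aK _)) (h1.symm.trans h1')
    have e2 := I.ph_inj w (I.hK (I.aK _)) (I.hK (I.bK _)) (h2.symm.trans h2')
    have := I.hord j
    have := I.hord j'
    linarith
  · have e1 := I.ph_inj w (I.hK (I.aK _)) (I.hK (I.bK _)) (h1.symm.trans h1')
    have e2 := I.ph_inj w (I.hK (I.bK _)) (I.hK (I.aK _)) (h2.symm.trans h2')
    have := I.hord j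
    have := I.hord j'
    linarith
  · exact hbb (I.ph_inj w (I.hK (I.bK _)) (I.hK (I.bK _)) (h2.symm.trans h2'))

/-! metric data -/

noncomputable def LP (w : List (Fin (m+1))) : ℝ := Real.log |I.ph w I.c - I.ph w I.d|

structure Met (s : Fin (m+1) → ℝ) (t : Fin m → ℝ) (δ : ℝ) : Prop where
  h1 : ∀ i w, |I.LP (i :: w) - I.LP w - s i| ≤ δ
  h2 : ∀ w j, |Real.log |I.Bp w j - I.Ap w j| - I.LP w - t j| ≤ δ

theorem cyl_end {w : List (Fin (m+1))} {x : ℝ} (hx : x ∈ I.cyl w) :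
    x ∈ uIcc (I.ph w I.c) (I.ph w I.d) := by
  obtain ⟨y, hy, rfl⟩ := hx
  rw [uIcc_image_iff (I.ph_mono w) I.c_mem I.d_mem (I.hK hy), uIcc_of_le I.hcd.le]
  exact I.hK hy

theorem ph_ne (w : List (Fin (m+1))) : I.ph w I.c ≠ I.ph w I.d := fun h =>
  I.hcd.ne (I.ph_inj w I.c_mem I.d_mem h)

theorem log_le_LP {w : List (Fin (m+1))} {x y : ℝ} (hx : x ∈ I.cyl w) (hy : y ∈ I.cyl w)
    (hne : x ≠ y) : Real.log |x - y| ≤ I.LP w := by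
  apply Real.log_le_log (abs_pos.2 (sub_ne_zero.2 hne))
  have := abs_sub_le_of_uIcc_subset_uIcc (uIcc_subset_uIcc (I.cyl_end hx) (I.cyl_end hy))
  rwa [abs_sub_comm x y, abs_sub_comm (I.ph w I.c)]

theorem maxword {σ : ℝ} (hσ : 0 < σ) (hdec : ∀ i w, I.LP (i :: w) ≤ I.LP w - σ)
    {q : List (Fin (m+1))} {x y : ℝ} (hx : x ∈ I.cyl q) (hy : y ∈ I.cyl q) (hne : x ≠ y) :
    ∃ u, x ∈ I.cyl (u ++ q) ∧ y ∈ I.cyl (u ++ q) ∧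
      ∀ i, ¬ (x ∈ I.cyl (i :: (u ++ q)) ∧ y ∈ I.cyl (i :: (u ++ q))) := by
  by_contra hcon
  push Not at hcon
  have : ∀ n : ℕ, ∃ u, x ∈ I.cyl (u ++ q) ∧ y ∈ I.cyl (u ++ q) ∧
      I.LP (u ++ q) ≤ I.LP q - n * σ := by
    intro n
    induction n with
    | zero => exact ⟨[], hx, hy, by simp⟩
    | succ n ih =>
      obtain ⟨u, h1, h2, h3⟩ := ih
      obtain ⟨i, hi1, hi2⟩ := hcon u h1 h2
      refine ⟨i :: u, hi1, hi2, ?_⟩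
      have := hdec i (u ++ q)
      simp only [List.cons_append]
      push_cast
      linarith
  obtain ⟨n, hn⟩ := exists_nat_gt ((I.LP q - Real.log |x - y|) / σ)
  obtain ⟨u, h1, h2, h3⟩ := this n
  have := I.log_le_LP h1 h2 hne
  rw [div_lt_iff₀ hσ] at hn
  linarith

theorem gap_class {σ : ℝ} (hσ : 0 < σ) (hdec : ∀ i w, I.LP (i :: w) ≤ I.LP w - σ)
    {q : List (Fin (m+1))} {x y : ℝ} (hx : x ∈ I.cyl q) (hy : y ∈ I.cyl q)
    (h : IsGap I.K x y) : ∃ u j, I.Lab (u ++ q) j x y := by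
  obtain ⟨u, h1, h2, h3⟩ := I.maxword hσ hdec hx hy h.2.2.1
  obtain ⟨j, hB, hA⟩ := I.split h1 h2 h3
  refine ⟨u, j, ?_⟩
  have hne := I.Bp_ne_Ap (u ++ q) j
  rcases h.2.2.2 _ (I.cyl_sub _ (I.Bp_mem _ j)) hB with e | e <;>
    rcases h.2.2.2 _ (I.cyl_sub _ (I.Ap_mem _ j)) hA with e' | e'
  · exact absurd (e.trans e'.symm) hne
  · exact Or.inl ⟨e.symm, e'.symm⟩
  · exact Or.inr ⟨e'.symm, e.symm⟩
  · exact absurd (e.trans e'.symm) hne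

theorem gap_class_Kt {σ : ℝ} (hσ : 0 < σ) (hdec : ∀ i w, I.LP (i :: w) ≤ I.LP w - σ)
    {x y : ℝ} (h : IsGap I.Kt x y) :
    (∃ n : ℤ, x + n = I.c ∨ x + n = I.d) ∨ ∃ w j, I.LabZ w j x y := by
  obtain ⟨n, hn⟩ := h.1
  obtain ⟨n', hn'⟩ := h.2.1
  by_cases e : n = n'
  · subst e
    right
    have hg : IsGap I.K (x + n) (y + n) := I.gap_Kt_K ((I.CM_add n).gap h) hn hn'
    obtain ⟨u, j, hu⟩ := I.gap_class hσ hdec (q := []) (by rwa [cyl_nil]) (by rwa [cyl_nil]) hg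
    exact ⟨u ++ [], j, n, hu⟩
  · left
    have hc0 := I.hc0
    have hd1 := I.hd1
    have hx := I.hK hn
    have hy := I.hK hn'
    rcases lt_or_gt_of_ne e with e | e
    · -- the second point is smaller
      refine ⟨n, Or.inl ?_⟩
      have e' : (n : ℝ) + 1 ≤ n' := by exact_mod_cast e
      have := h.2.2.2 (I.c + (-n : ℤ)) ((I.Kt_shift _).2 (I.K_sub_Kt I.hcK)) (by
        rw [mem_uIcc]; right; push_cast
        constructor <;> linarith [hx.1, hx.2, hy.1, hy.2])
      push_cast at this
      rcases this with t | t
      · linarith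
      · linarith [hx.1, hx.2, hy.1, hy.2]
    · refine ⟨n, Or.inr ?_⟩
      have e' : (n' : ℝ) + 1 ≤ n := by exact_mod_cast e
      have := h.2.2.2 (I.d + (-n : ℤ)) ((I.Kt_shift _).2 (I.K_sub_Kt I.hdK)) (by
        rw [mem_uIcc]; left; push_cast
        constructor <;> linarith [hx.1, hx.2, hy.1, hy.2])
      push_cast at this
      rcases this with t | t
      · linarith
      · linarith [hx.1, hx.2, hy.1, hy.2]

end IFS

open Set

namespace IFS

variable {m : ℕ} (I : IFS m)

noncomputable def sw (s : Fin (m+1) → ℝ) (w : List (Fin (m+1))) : ℝ := (w.map s).sum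
noncomputable def lg (s : Fin (m+1) → ℝ) (t : Fin m → ℝ) (w : List (Fin (m+1))) (j : Fin m) : ℝ :=
  sw s w + t j

theorem sw_append (s : Fin (m+1) → ℝ) (u w : List (Fin (m+1))) :
    sw s (u ++ w) = sw s u + sw s w := by simp [sw]
theorem sw_cons (s : Fin (m+1) → ℝ) (i : Fin (m+1)) (w : List (Fin (m+1))) :
    sw s (i :: w) = s i + sw s w := by simp [sw]

theorem lg_append (s : Fin (m+1) → ℝ) (t : Fin m → ℝ) (u w : List (Fin (m+1))) (j : Fin m) :
    lg s t (u ++ w) j = lg s t u j + sw s w := by simp [lg, sw_append]; ring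

/-- constants adapted to the weights -/
structure Cst (s : Fin (m+1) → ℝ) (t : Fin m → ℝ) (σ M : ℝ) (p : ℕ) (τ : ℝ) : Prop where
  σpos : 0 < σ
  Mnn : 0 ≤ M
  hs : ∀ i, s i ≤ -(2 * σ)
  hsM : ∀ i, |s i| ≤ M
  htM : ∀ j, |t j| ≤ M
  hp1 : 1 ≤ p
  hp : 3 * M + 4 ≤ p * σ
  τpos : 0 < τ
  hτ : ∀ u₁ u₂ u₃ u₄ : List (Fin (m+1)), u₁.length ≤ p → u₂.length ≤ p → u₃.length ≤ p →
    u₄.length ≤ p → ∀ j₁ j₂ j₃ j₄,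
    |lg s t u₁ j₁ - lg s t u₂ j₂ - (lg s t u₃ j₃ - lg s t u₄ j₄)| < τ →
    lg s t u₁ j₁ - lg s t u₂ j₂ - (lg s t u₃ j₃ - lg s t u₄ j₄) = 0

theorem sw_le {s : Fin (m+1) → ℝ} {σ : ℝ} (hs : ∀ i, s i ≤ -(2 * σ)) (w : List (Fin (m+1))) :
    sw s w ≤ -(2 * σ * w.length) := by
  induction w with
  | nil => simp [sw]
  | cons i w ih =>
    rw [sw_cons]; have := hs i
    simp only [List.length_cons]; push_cast; linarith

theorem sw_ge {s : Fin (m+1) → ℝ} {M : ℝ} (hs : ∀ i, |s i| ≤ M) (w : List (Fin (m+1))) :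
    -(M * w.length) ≤ sw s w := by
  induction w with
  | nil => simp [sw]
  | cons i w ih =>
    rw [sw_cons]; have := (abs_le.1 (hs i)).1
    simp only [List.length_cons]; push_cast; linarith

theorem exists_Cst (s : Fin (m+1) → ℝ) (t : Fin m → ℝ) (hs : ∀ i, s i < 0) :
    ∃ σ M p τ, Cst s t σ M p τ := by
  obtain ⟨i0, h0⟩ := Finite.exists_max s
  obtain ⟨M, hM⟩ : ∃ M, 0 ≤ M ∧ (∀ i, |s i| ≤ M) ∧ ∀ j, |t j| ≤ M := by
    refine ⟨∑ i, |s i| + ∑ j, |t j|, by positivity, fun i => ?_, fun j => ?_⟩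
    · have := Finset.single_le_sum (f := fun i => |s i|) (fun i _ => abs_nonneg _)
        (Finset.mem_univ i)
      have h2 : 0 ≤ ∑ j, |t j| := by positivity
      linarith
    · have := Finset.single_le_sum (f := fun i => |t i|) (fun i _ => abs_nonneg _)
        (Finset.mem_univ j)
      have h2 : 0 ≤ ∑ j, |s j| := by positivity
      linarith
  set σ := -(s i0) / 2 with hσ
  have σpos : 0 < σ := by have := hs i0; simp only [hσ]; linarith
  obtain ⟨p, hp⟩ := exists_nat_ge (max 1 ((3 * M + 4) / σ))
  have hp1 : 1 ≤ p := by exact_mod_cast (le_max_left _ _).trans hp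
  have hp2 : (3 * M + 4) / σ ≤ p := (le_max_right _ _).trans hp
  rw [div_le_iff₀ σpos] at hp2
  -- finite set of differences
  let W : Set (List (Fin (m+1))) := {u | u.length ≤ p}
  have hW : W.Finite := List.finite_length_le _ p
  let V : Set ℝ := (fun x : ((List (Fin (m+1)) × List (Fin (m+1))) ×
      (List (Fin (m+1)) × List (Fin (m+1)))) × ((Fin m × Fin m) × (Fin m × Fin m)) =>
      |lg s t x.1.1.1 x.2.1.1 - lg s t x.1.1.2 x.2.1.2 -
        (lg s t x.1.2.1 x.2.2.1 - lg s t x.1.2.2 x.2.2.2)|) '' (((W ×ˢ W) ×ˢ (W ×ˢ W)) ×ˢ univ)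
  have hV : V.Finite := ((((hW.prod hW).prod (hW.prod hW))).prod finite_univ).image _
  have hV' : (V \ {0}).Finite := hV.subset sdiff_subset
  obtain ⟨τ, hτ, hτ'⟩ : ∃ τ > 0, ∀ x ∈ V, x < τ → x = 0 := by
    by_cases hne : (V \ {0}).Nonempty
    · obtain ⟨x0, hx0, hmin⟩ := Set.exists_min_image _ id hV' hne
      have hx0' : 0 < x0 := by
        obtain ⟨⟨y, _, rfl⟩, h2⟩ := hx0
        exact lt_of_le_of_ne (abs_nonneg _) (fun h => h2 h.symm)
      refine ⟨x0, hx0', fun x hx hlt => ?_⟩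
      by_contra hx0
      exact absurd (hmin x ⟨hx, hx0⟩) (not_le.2 hlt)
    · refine ⟨1, one_pos, fun x hx _ => ?_⟩
      by_contra hx0
      exact hne ⟨x, hx, hx0⟩
  refine ⟨σ, M, p, τ, σpos, hM.1, fun i => ?_, hM.2.1, hM.2.2, hp1, hp2, hτ, ?_⟩
  · have := h0 i; simp only [hσ]; linarith
  · intro u₁ u₂ u₃ u₄ h₁ h₂ h₃ h₄ j₁ j₂ j₃ j₄ h
    have := hτ' _ ⟨(((u₁, u₂), (u₃, u₄)), ((j₁, j₂), (j₃, j₄))),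
      ⟨⟨⟨h₁, h₂⟩, ⟨h₃, h₄⟩⟩, mem_univ _⟩, rfl⟩ h
    exact abs_eq_zero.1 this

structure Small (F : ℝ → ℝ) (N : ℕ) (δ' : ℝ) : Prop where
  s1 : ∀ w : List (Fin (m+1)), N ≤ w.length → ∃ n : ℤ, ∀ x ∈ I.cyl w, F x + n ∈ I.K
  s2 : ∀ w : List (Fin (m+1)), N ≤ w.length → ∀ x ∈ I.cyl w, ∀ y ∈ I.cyl w, ∀ x' ∈ I.cyl w,
    ∀ y' ∈ I.cyl w, x ≠ y → x' ≠ y' →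
    |Real.log |F x - F y| - Real.log |x - y| - (Real.log |F x' - F y'| - Real.log |x' - y'|)| ≤ δ'

variable {I} {s : Fin (m+1) → ℝ} {t : Fin m → ℝ} {σ M τ δ δ' : ℝ} {p : ℕ}

theorem Met.dec (hM : I.Met s t δ) (hs : ∀ i, s i ≤ -(2 * σ)) (hδ : δ ≤ σ) (i : Fin (m+1))
    (w : List (Fin (m+1))) : I.LP (i :: w) ≤ I.LP w - σ := by
  have := (abs_le.1 (hM.h1 i w)).2
  have := hs i
  linarith

theorem Met.dec' (hM : I.Met s t δ) (hs : ∀ i, s i ≤ -(2 * σ)) (hδ : δ ≤ σ)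
    (u w : List (Fin (m+1))) : I.LP (u ++ w) ≤ I.LP w - σ * u.length := by
  induction u with
  | nil => simp
  | cons i u ih =>
    have := hM.dec hs hδ i (u ++ w)
    simp only [List.cons_append, List.length_cons]; push_cast; linarith

theorem Met.LP_append (hM : I.Met s t δ) (u w : List (Fin (m+1))) :
    |I.LP (u ++ w) - I.LP w - sw s u| ≤ δ * u.length := by
  induction u with
  | nil => simp [sw]
  | cons i u ih =>
    have := hM.h1 i (u ++ w)
    simp only [List.cons_append, List.length_cons, sw_cons]; push_cast
    rw [abs_le] at *
    constructor <;> linarith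

theorem Met.gap_log (hM : I.Met s t δ) (u w : List (Fin (m+1))) (j : Fin m) :
    |Real.log |I.Bp (u ++ w) j - I.Ap (u ++ w) j| - I.LP w - lg s t u j| ≤ δ * (u.length + 1) := by
  have h1 := hM.LP_append u w
  have h2 := hM.h2 (u ++ w) j
  unfold lg
  rw [abs_le] at *
  constructor <;> linarith

theorem keyA2 (hC : Cst s t σ M p τ) (hM : I.Met s t δ) (hδ0 : 0 ≤ δ) (hδσ : δ ≤ σ) (hδ1 : δ ≤ 1)
    (hδ'1 : δ' ≤ 1) (hsm : (2 * p + 6) * δ + δ' < τ) {F : ℝ → ℝ} (hF : I.CM F) {N : ℕ}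
    (hS : I.Small F N δ') {w : List (Fin (m+1))} (hw : N ≤ w.length)
    {u₁ u₂ : List (Fin (m+1))} (hu₁ : u₁.length ≤ 1) (hu₂ : u₂.length ≤ 1) {j₁ j₂ : Fin m}
    {w₁ w₂ : List (Fin (m+1))} {i₁ i₂ : Fin m}
    (hl₁ : I.LabZ w₁ i₁ (F (I.Bp (u₁ ++ w) j₁)) (F (I.Ap (u₁ ++ w) j₁)))
    (hl₂ : I.LabZ w₂ i₂ (F (I.Bp (u₂ ++ w) j₂)) (F (I.Ap (u₂ ++ w) j₂))) :
    lg s t w₁ i₁ - lg s t (u₁ ++ w) j₁ = lg s t w₂ i₂ - lg s t (u₂ ++ w) j₂ := by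
  obtain ⟨n, hn⟩ := hS.s1 w hw
  have hc : I.ph w I.c ∈ I.cyl w := ⟨_, I.hcK, rfl⟩
  have hd : I.ph w I.d ∈ I.cyl w := ⟨_, I.hdK, rfl⟩
  have hG : I.CM ((fun x => x + (n : ℝ)) ∘ F) := (I.CM_add n).comp hF
  have hdec := hM.dec hC.hs hδσ
  have hne : F (I.ph w I.c) + n ≠ F (I.ph w I.d) + n := fun h =>
    I.ph_ne w (hF.inj (add_right_cancel h))
  obtain ⟨q, hq1, hq2, hq3⟩ := I.maxword hC.σpos hdec (q := [])
    (by rw [cyl_nil]; exact hn _ hc) (by rw [cyl_nil]; exact hn _ hd) hne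
  rw [List.append_nil] at hq1 hq2 hq3
  obtain ⟨j, hB, hA⟩ := I.split hq1 hq2 hq3
  have hlow : I.LP q - M - δ ≤ Real.log |F (I.ph w I.c) - F (I.ph w I.d)| := by
    have h1 := hM.h2 q j
    have h2 : Real.log |I.Bp q j - I.Ap q j| ≤ Real.log |F (I.ph w I.c) - F (I.ph w I.d)| := by
      apply Real.log_le_log (abs_pos.2 (sub_ne_zero.2 (I.Bp_ne_Ap q j)))
      have := abs_sub_le_of_uIcc_subset_uIcc (uIcc_subset_uIcc hB hA)
      rw [add_sub_add_right_eq_sub] at this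
      rwa [abs_sub_comm (I.Bp q j), abs_sub_comm (F (I.ph w I.c))]
    have h3 := (abs_le.1 (hC.htM j)).1
    have h4 := (abs_le.1 h1).1
    linarith
  have hin : ∀ x ∈ I.cyl w, F x + n ∈ I.cyl q := fun x hx =>
    I.cyl_convex hq1 hq2 (hn x hx) (hG.uIcc.2 (I.cyl_end hx))
  -- treatment of one gap
  have one : ∀ {u₁ : List (Fin (m+1))} (_ : u₁.length ≤ 1) {j₁ : Fin m}
    {w₁ : List (Fin (m+1))} {i₁ : Fin m}
    (_ : I.LabZ w₁ i₁ (F (I.Bp (u₁ ++ w) j₁)) (F (I.Ap (u₁ ++ w) j₁))),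
    ∃ v, w₁ = v ++ q ∧ v.length ≤ p ∧
      |Real.log |F (I.Bp (u₁ ++ w) j₁) - F (I.Ap (u₁ ++ w) j₁)| - I.LP q - lg s t v i₁|
        ≤ δ * (p + 1) := by
    intro u₁ hu₁ j₁ w₁ i₁ hl₁
    have hBm := I.cyl_append_sub _ _ (I.Bp_mem (u₁ ++ w) j₁)
    have hAm := I.cyl_append_sub _ _ (I.Ap_mem (u₁ ++ w) j₁)
    obtain ⟨⟨v, rfl⟩, hlab⟩ := I.LabZ_suffix hl₁ (hin _ hBm) (hin _ hAm)
    have heq : |F (I.Bp (u₁ ++ w) j₁) - F (I.Ap (u₁ ++ w) j₁)| =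
        |I.Bp (v ++ q) i₁ - I.Ap (v ++ q) i₁| := by
      rcases hlab with ⟨e1, e2⟩ | ⟨e1, e2⟩
      · rw [← e1, ← e2, add_sub_add_right_eq_sub]
      · rw [← e1, ← e2, add_sub_add_right_eq_sub, abs_sub_comm]
    have hgl := hM.gap_log v q i₁
    have hgl1 := (abs_le.1 (hM.gap_log u₁ w j₁)).1
    have hu1 : (u₁.length : ℝ) ≤ 1 := by exact_mod_cast hu₁
    have hs2 := (abs_le.1 (hS.s2 w hw _ hBm _ hAm _ hc _ hd (I.Bp_ne_Ap _ _) (I.ph_ne w))).1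
    have hlgu : -(2 * M) ≤ lg s t u₁ j₁ := by
      have h1 := sw_ge hC.hsM u₁
      have h2 := (abs_le.1 (hC.htM j₁)).1
      have h3 : M * u₁.length ≤ M * 1 := mul_le_mul_of_nonneg_left hu1 hC.Mnn
      unfold lg; linarith
    have hup := I.log_le_LP (I.Bp_mem (v ++ q) i₁) (I.Ap_mem (v ++ q) i₁) (I.Bp_ne_Ap _ _)
    have hdv := hM.dec' hC.hs hδσ v q
    have hδu : δ * (u₁.length + 1) ≤ 2 * δ := by nlinarith
    rw [heq] at hs2
    have hLP : I.LP w = Real.log |I.ph w I.c - I.ph w I.d| := rfl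
    have hvl : σ * v.length ≤ 3 * M + 4 - 0 + 2 * δ - 2 * δ := by nlinarith
    have hvp : v.length ≤ p := by
      have h1 := hC.hp
      have h2 : σ * v.length ≤ σ * p := by linarith
      exact_mod_cast le_of_mul_le_mul_left h2 hC.σpos
    refine ⟨v, rfl, hvp, ?_⟩
    rw [heq]
    refine hgl.trans ?_
    have : (v.length : ℝ) ≤ p := by exact_mod_cast hvp
    exact mul_le_mul_of_nonneg_left (by linarith) hδ0
  obtain ⟨v₁, rfl, hv₁, e₁⟩ := one hu₁ hl₁
  obtain ⟨v₂, rfl, hv₂, e₂⟩ := one hu₂ hl₂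
  have hs2 := hS.s2 w hw _ (I.cyl_append_sub _ _ (I.Bp_mem (u₁ ++ w) j₁))
    _ (I.cyl_append_sub _ _ (I.Ap_mem (u₁ ++ w) j₁))
    _ (I.cyl_append_sub _ _ (I.Bp_mem (u₂ ++ w) j₂))
    _ (I.cyl_append_sub _ _ (I.Ap_mem (u₂ ++ w) j₂)) (I.Bp_ne_Ap _ _) (I.Bp_ne_Ap _ _)
  have g₁ := hM.gap_log u₁ w j₁
  have g₂ := hM.gap_log u₂ w j₂
  have hu1 : (u₁.length : ℝ) ≤ 1 := by exact_mod_cast hu₁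
  have hu2 : (u₂.length : ℝ) ≤ 1 := by exact_mod_cast hu₂
  have d1 : δ * (u₁.length + 1) ≤ 2 * δ := by nlinarith
  have d2 : δ * (u₂.length + 1) ≤ 2 * δ := by nlinarith
  have hp1 := hC.hp1
  have := hC.hτ v₁ v₂ u₁ u₂ hv₁ hv₂ (by omega) (by omega) i₁ i₂ j₁ j₂ (by
    rw [abs_le] at *
    rw [abs_lt]
    constructor <;> linarith)
  simp only [lg_append]
  linarith

/-- every image of a small gap has a label -/
theorem small_lab (hσ : 0 < σ) (hdec : ∀ i w, I.LP (i :: w) ≤ I.LP w - σ) {F : ℝ → ℝ}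
    (hF : I.CM F) {N : ℕ} (hS : I.Small F N δ') {w : List (Fin (m+1))} (hw : N ≤ w.length)
    (j : Fin m) : ∃ w' j', I.LabZ w' j' (F (I.Bp w j)) (F (I.Ap w j)) := by
  obtain ⟨n, hn⟩ := hS.s1 w hw
  have hg := ((I.CM_add n).comp hF).gap (I.gap_K_Kt (I.gap_lab w j))
  have hg' := I.gap_Kt_K hg (hn _ (I.Bp_mem _ _)) (hn _ (I.Ap_mem _ _))
  obtain ⟨u, j', h⟩ := I.gap_class hσ hdec (q := []) (by rw [cyl_nil]; exact hg'.1)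
    (by rw [cyl_nil]; exact hg'.2.1) hg'
  exact ⟨u ++ [], j', n, h⟩

theorem keyA3 (hC : Cst s t σ M p τ) (hM : I.Met s t δ) (hδ0 : 0 ≤ δ) (hδσ : δ ≤ σ) (hδ1 : δ ≤ 1)
    (hδ'1 : δ' ≤ 1) (hsm : (2 * p + 6) * δ + δ' < τ) {F : ℝ → ℝ} (hF : I.CM F) {N : ℕ}
    (hS : I.Small F N δ') {w : List (Fin (m+1))} (hw : N ≤ w.length)
    {u₁ u₂ : List (Fin (m+1))} {j₁ j₂ : Fin m}
    {w₁ w₂ : List (Fin (m+1))} {i₁ i₂ : Fin m}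
    (hl₁ : I.LabZ w₁ i₁ (F (I.Bp (u₁ ++ w) j₁)) (F (I.Ap (u₁ ++ w) j₁)))
    (hl₂ : I.LabZ w₂ i₂ (F (I.Bp (u₂ ++ w) j₂)) (F (I.Ap (u₂ ++ w) j₂))) :
    lg s t w₁ i₁ - lg s t (u₁ ++ w) j₁ = lg s t w₂ i₂ - lg s t (u₂ ++ w) j₂ := by
  have hdec := hM.dec hC.hs hδσ
  have key : ∀ (u₁ : List (Fin (m+1))) (j₁ j₂ : Fin m) (w₁ w₂ : List (Fin (m+1))) (i₁ i₂ : Fin m),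
    I.LabZ w₁ i₁ (F (I.Bp (u₁ ++ w) j₁)) (F (I.Ap (u₁ ++ w) j₁)) →
    I.LabZ w₂ i₂ (F (I.Bp w j₂)) (F (I.Ap w j₂)) →
    lg s t w₁ i₁ - lg s t (u₁ ++ w) j₁ = lg s t w₂ i₂ - lg s t w j₂ := by
    intro u₁
    induction u₁ with
    | nil =>
      intro j₁ j₂ w₁ w₂ i₁ i₂ h1 h2
      exact keyA2 hC hM hδ0 hδσ hδ1 hδ'1 hsm hF hS hw (u₁ := []) (u₂ := []) (by simp) (by simp)
        h1 h2
    | cons i u ih =>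
      intro j₁ j₂ w₁ w₂ i₁ i₂ h1 h2
      have hw' : N ≤ (u ++ w).length := by rw [List.length_append]; omega
      obtain ⟨w₃, i₃, h3⟩ := small_lab hC.σpos hdec hF hS hw' j₁
      rw [← ih j₁ j₂ w₃ w₂ i₃ i₂ h3 h2]
      exact keyA2 hC hM hδ0 hδσ hδ1 hδ'1 hsm hF hS hw' (u₁ := [i]) (u₂ := []) (by simp) (by simp)
        h1 h3
  obtain ⟨w₃, i₃, h3⟩ := small_lab hC.σpos hdec hF hS hw j₁
  rw [key _ _ _ _ _ _ _ hl₁ h3, key _ _ _ _ _ _ _ hl₂ h3]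

end IFS

open Set

namespace IFS

variable {m : ℕ} (I : IFS m)

theorem CM.per_iter {I : IFS m} {F : ℝ → ℝ} (hF : I.CM F) (i : ℕ) (n : ℤ) :
    ∃ n' : ℤ, ∀ x, F^[i] (x + n) = F^[i] x + n' := (hF.iter i).per n

def Min (F : ℝ → ℝ) : Prop :=
  ∀ x ∈ I.K, ∀ w, ∃ n : ℕ, ∃ k : ℤ, F^[n] x + k ∈ I.cyl w

theorem Min.kt {I : IFS m} {F : ℝ → ℝ} (hF : I.CM F) (hMin : I.Min F) {y : ℝ} (hy : y ∈ I.Kt)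
    (w : List (Fin (m+1))) : ∃ n : ℕ, ∃ k : ℤ, F^[n] y + k ∈ I.cyl w := by
  obtain ⟨l, hl⟩ := hy
  obtain ⟨n, k, h⟩ := hMin _ hl w
  obtain ⟨l', hl'⟩ := hF.per_iter n l
  refine ⟨n, l' + k, ?_⟩
  rw [hl'] at h
  push_cast
  rwa [← add_assoc]

theorem Min.kt_ge {I : IFS m} {F : ℝ → ℝ} (hF : I.CM F) (hMin : I.Min F) {y : ℝ} (hy : y ∈ I.Kt)
    (w : List (Fin (m+1))) (N : ℕ) : ∃ n ≥ N, ∃ k : ℤ, F^[n] y + k ∈ I.cyl w := by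
  obtain ⟨n, k, h⟩ := hMin.kt hF (((hF.iter N).kt y).2 hy) w
  refine ⟨n + N, by omega, k, ?_⟩
  rwa [Function.iterate_add_apply]

theorem count {I : IFS m} (hm : 1 ≤ m) {F : ℝ → ℝ} (hF : I.CM F) (hMin : I.Min F) {y : ℝ}
    (hy : y ∈ I.Kt) {n0 D : ℕ} (hD : n0 < 2 ^ D) (Q : ℕ → List (Fin (m+1)))
    (hQ : ∀ s, (Q s).length = D)
    (h : ∀ s, ∃ s0 < n0, ∃ k : ℤ, F^[s] y + k ∈ I.cyl (Q s0)) : False := by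
  have hsurj : Function.Surjective
      (fun s : Fin n0 => (⟨Q s, hQ s⟩ : List.Vector (Fin (m+1)) D)) := by
    rintro ⟨w, hw⟩
    obtain ⟨n, k, hn⟩ := hMin.kt hF hy w
    obtain ⟨s0, hs0, k', hk'⟩ := h n
    have := I.int_eq (I.hK (I.cyl_sub _ hn)) (I.hK (I.cyl_sub _ hk'))
    subst this
    refine ⟨⟨s0, hs0⟩, ?_⟩
    apply Subtype.ext
    exact I.cyl_unique ((hQ s0).trans hw.symm) hk' hn
  have h1 : Fintype.card (List.Vector (Fin (m+1)) D) ≤ Fintype.card (Fin n0) :=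
    Fintype.card_le_of_surjective _ hsurj
  rw [card_vector, Fintype.card_fin, Fintype.card_fin] at h1
  have h2 : 2 ^ D ≤ (m + 1) ^ D := Nat.pow_le_pow_left (by omega) D
  omega

theorem orbit_mod {I : IFS m} {F : ℝ → ℝ} (hF : I.CM F) {y : ℝ} {r : ℕ} {n : ℤ}
    (h : F^[r] y = y + n) (q : ℕ) : ∃ k : ℤ, F^[r * q] y = y + k := by
  induction q with
  | zero => exact ⟨0, by simp⟩
  | succ q ih =>
    obtain ⟨k, hk⟩ := ih
    obtain ⟨k', hk'⟩ := hF.per_iter r k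
    refine ⟨n + k', ?_⟩
    rw [Nat.mul_succ, add_comm, Function.iterate_add_apply, hk, hk', h]
    push_cast; ring

theorem orbit_inj {I : IFS m} (hm : 1 ≤ m) {F : ℝ → ℝ} (hF : I.CM F) (hMin : I.Min F) {x : ℝ}
    (hx : x ∈ I.Kt) {i i' : ℕ} (hi : i < i') {n : ℤ} (h : F^[i'] x = F^[i] x + n) : False := by
  set y := F^[i] x with hy
  have hyK : y ∈ I.Kt := ((hF.iter i).kt x).2 hx
  obtain ⟨r, rfl⟩ : ∃ r, i' = r + i := ⟨i' - i, by omega⟩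
  have hr : 0 < r := by omega
  rw [Function.iterate_add_apply, ← hy] at h
  clear_value y
  have hW : ∀ s, ∃ w, w.length = r ∧ ∃ k : ℤ, F^[s] y + k ∈ I.cyl w := by
    intro s
    obtain ⟨k, hk⟩ := ((hF.iter s).kt y).2 hyK
    obtain ⟨w, hw, hw'⟩ := I.cyl_len r hk
    exact ⟨w, hw, k, hw'⟩
  choose Q hQ hQ' using hW
  refine count hm hF hMin hyK (Nat.lt_two_pow_self (n := r)) Q hQ fun s => ?_
  refine ⟨s % r, Nat.mod_lt _ hr, ?_⟩
  obtain ⟨k, hk⟩ := orbit_mod hF h (s / r)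
  obtain ⟨k', hk'⟩ := hF.per_iter (s % r) k
  obtain ⟨l, hl⟩ := hQ' (s % r)
  refine ⟨l - k', ?_⟩
  have e : F^[s] y = F^[s % r] (F^[r * (s / r)] y) := by
    rw [← Function.iterate_add_apply, Nat.mod_add_div]
  rw [e, hk, hk']
  push_cast
  convert hl using 1
  ring

theorem orbit_escape {I : IFS m} (hm : 1 ≤ m) {F : ℝ → ℝ} (hF : I.CM F) (hMin : I.Min F) {x : ℝ}
    (hx : x ∈ I.Kt) {Q : Set ℝ} (hQ : Q.Finite) :
    ∃ M0, ∀ i ≥ M0, ∀ n : ℤ, F^[i] x + n ∉ Q := by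
  have hfin : (⋃ q ∈ Q, {i : ℕ | ∃ n : ℤ, F^[i] x + n = q}).Finite := by
    refine hQ.biUnion fun q _ => Set.Subsingleton.finite ?_
    rintro i ⟨n, hn⟩ i' ⟨n', hn'⟩
    by_contra hne
    rcases lt_or_gt_of_ne hne with h | h
    · exact orbit_inj hm hF hMin hx h (n := n - n') (by push_cast; linarith)
    · exact orbit_inj hm hF hMin hx h (n := n' - n) (by push_cast; linarith)
  obtain ⟨B, hB⟩ := hfin.bddAbove
  refine ⟨B + 1, fun i hi n hn => ?_⟩
  have : i ≤ B := hB (mem_biUnion hn ⟨n, rfl⟩)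
  omega

theorem lg_len {s : Fin (m+1) → ℝ} {t : Fin m → ℝ} {M : ℝ} (hM0 : 0 ≤ M)
    (hs : ∀ i, |s i| ≤ M) (ht : ∀ j, |t j| ≤ M) {w : List (Fin (m+1))} {j : Fin m} {D : ℕ}
    (h : lg s t w j < -(M * (D + 1))) : D ≤ w.length := by
  by_contra hD
  push Not at hD
  have h1 := sw_ge hs w
  have h2 := abs_le.1 (ht j)
  have h3 : (w.length : ℝ) ≤ D := by exact_mod_cast hD.le
  have h4 := mul_le_mul_of_nonneg_left h3 hM0
  unfold lg at h
  linarith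

theorem labels {I : IFS m} (hm : 1 ≤ m) {s : Fin (m+1) → ℝ} {t : Fin m → ℝ} {σ M : ℝ} {p : ℕ}
    {τ : ℝ} (hC : Cst s t σ M p τ) (hdec : ∀ i w, I.LP (i :: w) ≤ I.LP w - σ)
    {F : ℝ → ℝ} (hF : I.CM F) (hMin : I.Min F) {x y : ℝ} (hg : IsGap I.Kt x y) (H : ℝ) :
    ∃ M0, ∀ i ≥ M0, ∃ w j, I.LabZ w j (F^[i] x) (F^[i] y) ∧ lg s t w j < -H := by
  obtain ⟨B, hB⟩ := exists_nat_gt ((H + M) / (2 * σ))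
  rw [div_lt_iff₀ (by linarith [hC.σpos])] at hB
  set Q : Set ℝ := {I.c, I.d} ∪ ⋃ w ∈ {w : List (Fin (m+1)) | w.length ≤ B},
    ((range fun j => I.Bp w j) ∪ (range fun j => I.Ap w j)) with hQ
  have hfin : Q.Finite := by
    refine (Set.toFinite _).union ((List.finite_length_le _ B).biUnion fun w _ => ?_)
    exact (Set.finite_range _).union (Set.finite_range _)
  obtain ⟨M0, hM0⟩ := orbit_escape hm hF hMin hg.1 hfin
  refine ⟨M0, fun i hi => ?_⟩
  rcases I.gap_class_Kt hC.σpos hdec ((hF.iter i).gap hg) with ⟨n, hn⟩ | ⟨w, j, hwj⟩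
  · exact absurd (Or.inl (by simpa using hn)) (hM0 i hi n)
  · refine ⟨w, j, hwj, ?_⟩
    have hw : B < w.length := by
      by_contra hw
      push Not at hw
      obtain ⟨n, hn⟩ := hwj
      refine hM0 i hi n (Or.inr (mem_biUnion (x := w) hw ?_))
      rcases hn with hn | hn
      · exact Or.inl ⟨j, hn.1.symm⟩
      · exact Or.inr ⟨j, hn.1.symm⟩
    have h1 := sw_le hC.hs w
    have h2 := abs_le.1 (hC.htM j)
    have h3 : (B : ℝ) ≤ w.length := by exact_mod_cast hw.le
    have h4 := mul_le_mul_of_nonneg_left h3 (by linarith [hC.σpos] : 0 ≤ 2 * σ)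
    unfold lg
    linarith

theorem deep {I : IFS m} {σ : ℝ} (hσ : 0 < σ) (hdec : ∀ i w, I.LP (i :: w) ≤ I.LP w - σ)
    {G : ℝ → ℝ} (hG : I.CM G) {v : List (Fin (m+1))} {n : ℤ}
    (hK : ∀ x ∈ I.cyl v, G x + n ∈ I.K) (D : ℕ)
    (H : ∀ u j0 q' j, I.LabZ q' j (G (I.Bp (u ++ v) j0)) (G (I.Ap (u ++ v) j0)) → D ≤ q'.length) :
    ∃ q, q.length = D ∧ ∀ x ∈ I.cyl v, G x + n ∈ I.cyl q := by
  induction D with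
  | zero => exact ⟨[], rfl, fun x hx => by rw [cyl_nil]; exact hK x hx⟩
  | succ D ih =>
    obtain ⟨q, hq, hqv⟩ := ih fun u j0 q' j h => (Nat.le_succ D).trans (H u j0 q' j h)
    have he1 : I.ph v I.c ∈ I.cyl v := ⟨_, I.hcK, rfl⟩
    have he2 : I.ph v I.d ∈ I.cyl v := ⟨_, I.hdK, rfl⟩
    have hG' : I.CM (fun x => G x + n) := (I.CM_add n).comp hG
    by_cases hc : ∃ i, G (I.ph v I.c) + n ∈ I.cyl (i :: q) ∧ G (I.ph v I.d) + n ∈ I.cyl (i :: q)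
    · obtain ⟨i, h1, h2⟩ := hc
      refine ⟨i :: q, by simp [hq], fun x hx => I.cyl_convex h1 h2 (hK x hx) ?_⟩
      exact (hG'.uIcc).2 (I.cyl_end hx)
    · exfalso
      push Not at hc
      obtain ⟨j, hB, hA⟩ := I.split (hqv _ he1) (hqv _ he2) fun i h => hc i h.1 h.2
      obtain ⟨xb, hxb⟩ := hG'.surj (I.Bp q j)
      obtain ⟨xa, hxa⟩ := hG'.surj (I.Ap q j)
      rw [← hxb] at hB
      rw [← hxa] at hA
      have hB' := (hG'.uIcc).1 hB
      have hA' := (hG'.uIcc).1 hA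
      have hgap : IsGap I.Kt xb xa := by
        refine hG'.gap_inv (?_ : IsGap I.Kt (G xb + n) (G xa + n))
        have h1 := I.gap_K_Kt (I.gap_lab q j)
        rwa [← hxb, ← hxa] at h1
      have hsub : Set.uIcc (I.ph v I.c) (I.ph v I.d) ⊆ Icc I.c I.d :=
        Set.uIcc_subset_Icc (I.ph_maps v I.c_mem) (I.ph_maps v I.d_mem)
      have hbK := I.Kt_Icc hgap.1 (hsub hB')
      have haK := I.Kt_Icc hgap.2.1 (hsub hA')
      obtain ⟨u, j0, hl⟩ := I.gap_class hσ hdec (I.cyl_convex he1 he2 hbK hB')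
        (I.cyl_convex he1 he2 haK hA') (I.gap_Kt_K hgap hbK haK)
      have h1 : I.LabZ q j (G xb) (G xa) := ⟨n, Or.inl ⟨hxb, hxa⟩⟩
      have h2 : I.LabZ (u ++ v) j0 xb xa := ⟨0, by simpa using hl⟩
      have := H u j0 q j (hG.lab h2 h1)
      omega

theorem Cst.lg_up {s : Fin (m+1) → ℝ} {t : Fin m → ℝ} {σ M : ℝ} {p : ℕ}
    {τ : ℝ} (hC : Cst s t σ M p τ) (u v : List (Fin (m+1))) (j j' : Fin m) :
    lg s t (u ++ v) j ≤ lg s t v j' + 2 * M := by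
  rw [lg_append]
  unfold lg
  have h1 := abs_le.1 (hC.htM j)
  have h2 := abs_le.1 (hC.htM j')
  have h3 := sw_le hC.hs u
  have h4 : 0 ≤ 2 * σ * u.length := by have := hC.σpos; positivity
  linarith

theorem no_min {I : IFS m} (hm : 1 ≤ m) {s : Fin (m+1) → ℝ} {t : Fin m → ℝ} {σ M : ℝ} {p : ℕ}
    {τ δ δ' : ℝ} (hC : Cst s t σ M p τ) (hM : I.Met s t δ) (hδ0 : 0 ≤ δ) (hδσ : δ ≤ σ)
    (hδ1 : δ ≤ 1) (hδ'1 : δ' ≤ 1) (hsm : (2 * p + 6) * δ + δ' < τ) {F : ℝ → ℝ} (hF : I.CM F)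
    {N : ℕ} (hS : I.Small F N δ') (hMin : I.Min F) : False := by
  have hdec := Met.dec hM hC.hs hδσ
  have hσ := hC.σpos
  set x0 := I.Bp [] ⟨0, hm⟩
  set y0 := I.Ap [] ⟨0, hm⟩
  have hg : IsGap I.Kt x0 y0 := I.gap_K_Kt (I.gap_lab _ _)
  obtain ⟨m0, hm0⟩ := labels hm hC hdec hF hMin hg (M * (N + 1) + 2 * M)
  have : Nonempty (Fin m) := ⟨⟨0, hm⟩⟩
  choose! W J hWJ hL using hm0
  set v := W m0
  set jv := J m0
  have hvl := hWJ m0 le_rfl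
  -- the reference labels
  have href : ∀ i, I.LabZ (W (m0 + i)) (J (m0 + i)) (F^[i] (I.Bp v jv)) (F^[i] (I.Ap v jv)) := by
    intro i
    refine (hF.iter i).lab hvl ?_
    rw [← Function.iterate_add_apply, ← Function.iterate_add_apply, add_comm i]
    exact hWJ _ (by omega)
  set L : ℕ → ℝ := fun i => lg s t (W (m0 + i)) (J (m0 + i)) with hLdef
  have hLlt : ∀ i, L i < -(M * (N + 1) + 2 * M) := fun i => hL _ (by omega)
  have hL0 : L 0 = lg s t v jv := rfl
  have hvN : N ≤ v.length := by
    refine lg_len hC.Mnn hC.hsM hC.htM (j := jv) ?_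
    have := hLlt 0
    rw [hL0] at this
    linarith [hC.Mnn]
  have up : ∀ i, (∀ u j w' j', I.LabZ w' j' (F^[i] (I.Bp (u ++ v) j)) (F^[i] (I.Ap (u ++ v) j)) →
      lg s t w' j' - lg s t (u ++ v) j = L i - L 0) → ∀ D : ℕ, L i < -(M * (D + 1) + 2 * M) →
      ∀ u j w' j', I.LabZ w' j' (F^[i] (I.Bp (u ++ v) j)) (F^[i] (I.Ap (u ++ v) j)) →
      D ≤ w'.length := by
    intro i h D hD u j w' j' hl
    have h1 := h u j w' j' hl
    have h2 := hC.lg_up u v j jv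
    exact lg_len hC.Mnn hC.hsM hC.htM (j := j') (by linarith)
  have inv : ∀ i, (∃ q, ∃ n : ℤ, N ≤ q.length ∧ ∀ x ∈ I.cyl v, F^[i] x + n ∈ I.cyl q) ∧
      ∀ u j w' j', I.LabZ w' j' (F^[i] (I.Bp (u ++ v) j)) (F^[i] (I.Ap (u ++ v) j)) →
      lg s t w' j' - lg s t (u ++ v) j = L i - L 0 := by
    intro i
    induction i with
    | zero =>
      refine ⟨⟨v, 0, hvN, fun x hx => by simpa using hx⟩, fun u j w' j' h => ?_⟩
      obtain ⟨h1, h2⟩ := I.lab_unique h (I.lab_self (u ++ v) j)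
      rw [h1, h2]; ring
    | succ i ih =>
      obtain ⟨⟨q, n, hqN, hq⟩, ih2⟩ := ih
      have cls : ∀ u j, ∃ u' j', I.LabZ (u' ++ q) j' (F^[i] (I.Bp (u ++ v) j))
          (F^[i] (I.Ap (u ++ v) j)) := by
        intro u j
        have h1 := hq _ (I.cyl_append_sub u v (I.Bp_mem (u ++ v) j))
        have h2 := hq _ (I.cyl_append_sub u v (I.Ap_mem (u ++ v) j))
        have hgK : IsGap I.Kt (F^[i] (I.Bp (u ++ v) j) + n) (F^[i] (I.Ap (u ++ v) j) + n) :=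
          (I.CM_add n).gap ((hF.iter i).gap (I.gap_K_Kt (I.gap_lab _ _)))
        obtain ⟨u', j', hl⟩ := I.gap_class hσ hdec h1 h2
          (I.gap_Kt_K hgK (I.cyl_sub _ h1) (I.cyl_sub _ h2))
        exact ⟨u', j', n, hl⟩
      have key : ∀ u j w' j',
          I.LabZ w' j' (F^[i+1] (I.Bp (u ++ v) j)) (F^[i+1] (I.Ap (u ++ v) j)) →
          lg s t w' j' - lg s t (u ++ v) j = L (i+1) - L 0 := by
        intro u j w' j' hl
        obtain ⟨u₁, j₁, hl₁⟩ := cls u j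
        obtain ⟨u₂, j₂, hl₂⟩ := cls [] jv
        have e1 := ih2 _ _ _ _ hl₁
        have e2 := ih2 _ _ _ _ hl₂
        rw [List.nil_append] at e2 hl₂
        have hr := href (i+1)
        rw [Function.iterate_succ_apply', Function.iterate_succ_apply'] at hl hr
        have e3 := I.keyA3 hC hM hδ0 hδσ hδ1 hδ'1 hsm hF hS hqN (hF.lab hl₁ hl)
          (hF.lab hl₂ hr)
        have e4 : lg s t (W (m0 + (i + 1))) (J (m0 + (i + 1))) = L (i+1) := rfl
        rw [e4] at e3
        linarith
      refine ⟨?_, key⟩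
      obtain ⟨n', hn'⟩ := hS.s1 q hqN
      obtain ⟨n'', hn''⟩ := hF.per n
      obtain ⟨q', hq', hqq⟩ := deep hσ hdec (hF.iter (i+1)) (v := v) (n := n'' + n')
        (fun x hx => by
          have := hn' _ (hq x hx)
          rw [hn''] at this
          rw [Function.iterate_succ_apply']
          push_cast
          rwa [← add_assoc]) N (up (i+1) key N (hLlt _))
      exact ⟨q', _, hq'.ge, hqq⟩
  have fin : ∀ D : ℕ, ∃ iD, ∀ i ≥ iD, ∃ q, q.length = D ∧
      ∃ n : ℤ, ∀ x ∈ I.cyl v, F^[i] x + n ∈ I.cyl q := by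
    intro D
    obtain ⟨M1, hM1⟩ := labels hm hC hdec hF hMin hg (M * (D + 1) + 2 * M)
    refine ⟨M1, fun i hi => ?_⟩
    obtain ⟨w, j, hwj, hlt⟩ := hM1 (m0 + i) (by omega)
    obtain ⟨e1, e2⟩ := I.lab_unique hwj (hWJ (m0 + i) (by omega))
    rw [e1, e2] at hlt
    obtain ⟨⟨q, n, -, hq⟩, h2⟩ := inv i
    obtain ⟨q', hq', hqq⟩ := deep hσ hdec (hF.iter i) (v := v) (n := n)
      (fun x hx => I.cyl_sub _ (hq x hx)) D (up i h2 D hlt)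
    exact ⟨q', hq', n, hqq⟩
  -- return map
  set x := I.ph v I.c
  have hx : x ∈ I.cyl v := ⟨_, I.hcK, rfl⟩
  have hxK : x ∈ I.Kt := I.K_sub_Kt (I.cyl_sub _ hx)
  obtain ⟨i1, hi1⟩ := fin v.length
  obtain ⟨n0, hn0, k0, hk0⟩ := hMin.kt_ge hF hxK v (i1 + 1)
  obtain ⟨q, hq, n, hqn⟩ := hi1 n0 (by omega)
  have hret : ∀ z ∈ I.cyl v, F^[n0] z + n ∈ I.cyl v := by
    have h1 := hqn x hx
    have h2 := I.int_eq (I.hK (I.cyl_sub _ hk0)) (I.hK (I.cyl_sub _ h1))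
    rw [h2] at hk0
    have h3 := I.cyl_unique hq h1 hk0
    rwa [h3] at hqn
  have hretq : ∀ r : ℕ, ∃ k : ℤ, F^[n0 * r] x + k ∈ I.cyl v := by
    intro r
    induction r with
    | zero => exact ⟨0, by simpa using hx⟩
    | succ r ih =>
      obtain ⟨k, hk⟩ := ih
      have h1 := hret _ hk
      obtain ⟨k', hk'⟩ := hF.per_iter n0 k
      refine ⟨k' + n, ?_⟩
      rw [hk'] at h1
      rw [Nat.mul_succ, add_comm (n0 * r), Function.iterate_add_apply]
      push_cast
      rwa [← add_assoc]
  obtain ⟨iD, hiD⟩ := fin n0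
  have hQ : ∀ s, ∃ q, q.length = n0 ∧ ∃ n : ℤ, ∀ x ∈ I.cyl v, F^[iD + s] x + n ∈ I.cyl q :=
    fun s => hiD _ (by omega)
  choose Q hQl hQn using hQ
  refine count hm hF hMin (((hF.iter iD).kt x).2 hxK) (Nat.lt_two_pow_self (n := n0)) Q hQl
    fun s => ?_
  refine ⟨s % n0, Nat.mod_lt _ (by omega), ?_⟩
  obtain ⟨k, hk⟩ := hretq (s / n0)
  obtain ⟨n1, hn1⟩ := hQn (s % n0)
  have h1 := hn1 _ hk
  obtain ⟨k', hk'⟩ := hF.per_iter (iD + s % n0) k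
  refine ⟨k' + n1, ?_⟩
  rw [hk'] at h1
  have e : F^[s] (F^[iD] x) = F^[iD + s % n0] (F^[n0 * (s / n0)] x) := by
    rw [← Function.iterate_add_apply, ← Function.iterate_add_apply, add_assoc, Nat.mod_add_div,
      add_comm]
  rw [e]
  push_cast
  rwa [← add_assoc]

end IFS

open Set

theorem circle_eq {x y : ℝ} (h : (x : AddCircle (1:ℝ)) = y) : ∃ n : ℤ, x = y + n := by
  have h1 : ((x - y : ℝ) : AddCircle (1:ℝ)) = 0 := by
    rw [AddCircle.coe_sub, h, sub_self]
  obtain ⟨n, hn⟩ := (AddCircle.coe_eq_zero_iff (1:ℝ)).1 h1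
  refine ⟨n, ?_⟩
  simp only [zsmul_eq_mul, mul_one] at hn
  linarith

theorem circle_add (x : ℝ) (n : ℤ) : ((x + n : ℝ) : AddCircle (1:ℝ)) = x := by
  have : ((n : ℝ) : AddCircle (1:ℝ)) = 0 := (AddCircle.coe_eq_zero_iff (1:ℝ)).2 ⟨n, by simp⟩
  rw [AddCircle.coe_add, this, add_zero]

theorem mvt {F : ℝ → ℝ} (hd : Differentiable ℝ F) {x y : ℝ} (h : x ≠ y) :
    ∃ ξ ∈ uIcc x y, F x - F y = deriv F ξ * (x - y) := by
  wlog hlt : x < y generalizing x y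
  · obtain ⟨ξ, h1, h2⟩ := this h.symm (lt_of_le_of_ne (not_lt.1 hlt) h.symm)
    exact ⟨ξ, by rwa [uIcc_comm], by linarith⟩
  obtain ⟨ξ, h1, h2⟩ := exists_deriv_eq_slope F hlt hd.continuous.continuousOn
    hd.differentiableOn
  refine ⟨ξ, by rw [uIcc_of_le hlt.le]; exact Ioo_subset_Icc_self h1, ?_⟩
  rw [h2]
  field_simp [(sub_pos.2 hlt).ne']
  ring

namespace IFS

variable {m : ℕ} (I : IFS m)

theorem coe_mem (x : ℝ) :
    (x : AddCircle (1:ℝ)) ∈ (fun x : ℝ => ((x : ℝ) : AddCircle (1 : ℝ))) '' I.K ↔ x ∈ I.Kt := by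
  constructor
  · rintro ⟨y, hy, h⟩
    obtain ⟨n, hn⟩ := circle_eq h
    exact ⟨n, by rwa [← hn]⟩
  · rintro ⟨n, hn⟩
    exact ⟨_, hn, circle_add x n⟩

theorem per_int {F : ℝ → ℝ} {e : ℝ} (h : ∀ x : ℝ, F (x + 1) = F x + e) (n : ℤ) :
    ∀ x, F (x + n) = F x + n * e := by
  induction n using Int.induction_on with
  | zero => simp
  | succ n ih =>
    intro x
    have h1 := h (x + n)
    have h2 := ih x
    push_cast at *
    rw [← add_assoc, h1, h2]; ring
  | pred n ih =>
    intro x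
    have h1 := h (x + (-n - 1))
    have h2 := ih x
    push_cast at *
    rw [show x + (-(n:ℝ) - 1) + 1 = x + -n by ring, h2] at h1
    linarith

theorem CM_of {F : ℝ → ℝ} {f : AddCircle (1 : ℝ) → AddCircle (1 : ℝ)}
    (h1 : ContDiff ℝ 1 F) (h2 : ∀ x : ℝ, deriv F x ≠ 0) {e : ℝ} (he : e = 1 ∨ e = -1)
    (h3 : ∀ x : ℝ, F (x + 1) = F x + e)
    (h4 : ∀ x : ℝ, f (x : ℝ) = ((F x : ℝ) : AddCircle (1 : ℝ)))
    (h5 : f '' ((fun x : ℝ => ((x : ℝ) : AddCircle (1 : ℝ))) '' I.K) =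
      (fun x : ℝ => ((x : ℝ) : AddCircle (1 : ℝ))) '' I.K) : I.CM F := by
  have hd : Differentiable ℝ F := h1.differentiable (by norm_num)
  have hmono : StrictMono F ∨ StrictAnti F := by
    rcases hasDerivWithinAt_forall_lt_or_forall_gt_of_forall_ne (f := F) (f' := deriv F) (m := 0)
      convex_univ (fun x _ => (hd x).hasDerivAt.hasDerivWithinAt) (fun x _ => h2 x) with h | h
    · exact Or.inr (strictAnti_of_deriv_neg fun x => h x (mem_univ x))
    · exact Or.inl (strictMono_of_deriv_pos fun x => h x (mem_univ x))
  have hinj : Function.Injective F := by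
    rcases hmono with h | h
    · exact h.injective
    · exact h.injective
  have hee : ∃ e' : ℤ, (e' : ℝ) = e ∧ e * e = 1 := by
    rcases he with h | h
    · exact ⟨1, by simp [h], by simp [h]⟩
    · exact ⟨-1, by simp [h], by simp [h]⟩
  obtain ⟨e', he', hsq⟩ := hee
  have hp := per_int h3
  refine ⟨hd.continuous, hmono, ?_, ?_, fun n => ⟨n * e', fun x => by rw [hp]; push_cast; rw [he']⟩⟩
  · intro y
    have key : ∀ n : ℤ, F (0 + ((n * e' : ℤ) : ℝ)) = F 0 + n := by
      intro n
      rw [hp]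
      push_cast
      rw [he', mul_assoc, hsq, mul_one]
    apply mem_range_of_exists_le_of_exists_ge hd.continuous
    · exact ⟨_, by rw [key ⌊y - F 0⌋]; linarith [Int.floor_le (y - F 0)]⟩
    · exact ⟨_, by rw [key ⌈y - F 0⌉]; linarith [Int.le_ceil (y - F 0)]⟩
  · intro x
    rw [← coe_mem, ← coe_mem]
    constructor
    · intro h
      rw [← h5] at h
      obtain ⟨_, ⟨y, hy, rfl⟩, h6⟩ := h
      have h6' : f (y : ℝ) = ((F x : ℝ) : AddCircle (1 : ℝ)) := h6
      rw [h4] at h6'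
      obtain ⟨n, hn⟩ := circle_eq h6'.symm
      have : x = y + ((n * e' : ℤ) : ℝ) := by
        apply hinj
        rw [hn, hp]
        push_cast
        rw [he', mul_assoc, hsq, mul_one]
      rw [this, circle_add]
      exact ⟨y, hy, rfl⟩
    · intro h
      rw [← h5]
      exact ⟨_, h, h4 x⟩

theorem Min_of {F : ℝ → ℝ} {f : AddCircle (1 : ℝ) → AddCircle (1 : ℝ)}
    (hF : I.CM F)
    (h4 : ∀ x : ℝ, f (x : ℝ) = ((F x : ℝ) : AddCircle (1 : ℝ)))
    (h6 : ∀ x ∈ (fun x : ℝ => ((x : ℝ) : AddCircle (1 : ℝ))) '' I.K,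
      closure {y | ∃ n : ℕ, f^[n] x = y} = (fun x : ℝ => ((x : ℝ) : AddCircle (1 : ℝ))) '' I.K) :
    I.Min F := by
  intro x hx w
  have hz : I.ph w I.c ∈ I.cyl w := ⟨_, I.hcK, rfl⟩
  set z := I.ph w I.c
  obtain ⟨η, hη, hcyl⟩ := I.cyl_open w hz
  have hzc : ((z : ℝ) : AddCircle (1:ℝ)) ∈
      closure {y | ∃ n : ℕ, f^[n] ((x : ℝ) : AddCircle (1:ℝ)) = y} := by
    rw [h6 _ ⟨x, hx, rfl⟩]
    exact ⟨z, I.cyl_sub _ hz, rfl⟩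
  have hd := I.hd1
  have hc := I.hc0
  obtain ⟨_, ⟨n, rfl⟩, hn⟩ := Metric.mem_closure_iff.1 hzc (min η (1 - (I.d - I.c)))
    (lt_min hη (by linarith))
  have hit : ∀ n : ℕ, f^[n] ((x : ℝ) : AddCircle (1:ℝ)) = ((F^[n] x : ℝ) : AddCircle (1:ℝ)) := by
    intro n
    induction n with
    | zero => rfl
    | succ n ih => rw [Function.iterate_succ_apply', Function.iterate_succ_apply', ih, h4]
  rw [hit, dist_comm, dist_eq_norm] at hn
  obtain ⟨k, hk⟩ := ((hF.iter n).kt x).2 (I.K_sub_Kt hx)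
  refine ⟨n, k, hcyl _ hk ?_⟩
  rw [← circle_add (F^[n] x) k, ← AddCircle.coe_sub, AddCircle.norm_eq] at hn
  set t := F^[n] x + k - z with ht
  have hk' := I.hK hk
  have hz' := I.hK (I.cyl_sub _ hz)
  have htl : |t| ≤ I.d - I.c := by
    rw [abs_le]; constructor <;> linarith [hk'.1, hk'.2, hz'.1, hz'.2]
  simp only [mul_one] at hn
  set r := round ((1:ℝ)⁻¹ * t)
  have hr : r = 0 := by
    by_contra hr
    have h1 : (1:ℝ) ≤ |(r:ℝ)| := by exact_mod_cast Int.one_le_abs hr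
    have h2 := hn.trans_le (min_le_right _ _)
    have h3 : |(r:ℝ)| ≤ |t| + |t - r| := by
      have := abs_sub_abs_le_abs_sub (r:ℝ) t
      rw [abs_sub_comm (r:ℝ) t] at this
      linarith
    linarith
  rw [hr] at hn
  simpa using hn.trans_le (min_le_left _ _)

theorem Small_of {s : Fin (m+1) → ℝ} {t : Fin m → ℝ} {δ σ : ℝ} (hM : I.Met s t δ)
    (hσ : 0 < σ) (hs : ∀ i, s i ≤ -(2 * σ)) (hδ : δ ≤ σ) {F : ℝ → ℝ}
    (h1 : ContDiff ℝ 1 F) (h2 : ∀ x : ℝ, deriv F x ≠ 0) (hF : I.CM F) {δ' : ℝ} (hδ' : 0 < δ') :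
    ∃ N, I.Small F N δ' := by
  have hd : Differentiable ℝ F := h1.differentiable (by norm_num)
  have hcd : Continuous (deriv F) := h1.continuous_deriv (by norm_num)
  have hgc : Continuous fun x => Real.log |deriv F x| :=
    (hcd.abs).log fun x => abs_ne_zero.2 (h2 x)
  have ug := isCompact_Icc.uniformContinuousOn_of_continuous (s := Icc I.c I.d) hgc.continuousOn
  have uF := isCompact_Icc.uniformContinuousOn_of_continuous (s := Icc I.c I.d)
    hd.continuous.continuousOn
  rw [Metric.uniformContinuousOn_iff] at ug uF
  obtain ⟨η₁, hη₁, ug⟩ := ug δ' hδ'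
  obtain ⟨η₂, hη₂, uF⟩ := uF (1 - (I.d - I.c)) (by linarith [I.hd1, I.hc0])
  obtain ⟨N, hN⟩ := exists_nat_gt ((I.LP [] - Real.log (min η₁ η₂)) / σ)
  rw [div_lt_iff₀ hσ] at hN
  have hdiam : ∀ w : List (Fin (m+1)), N ≤ w.length →
      |I.ph w I.c - I.ph w I.d| < min η₁ η₂ := by
    intro w hw
    have h3 := Met.dec' hM hs hδ w []
    rw [List.append_nil] at h3
    have h4 : (N:ℝ) * σ ≤ σ * w.length := by
      rw [mul_comm]; exact mul_le_mul_of_nonneg_left (by exact_mod_cast hw) hσ.le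
    have h5 : Real.log |I.ph w I.c - I.ph w I.d| < Real.log (min η₁ η₂) := by
      change I.LP w < _
      linarith
    exact (Real.log_lt_log_iff (abs_pos.2 (sub_ne_zero.2 (I.ph_ne w))) (lt_min hη₁ hη₂)).1 h5
  have hclose : ∀ w : List (Fin (m+1)), N ≤ w.length →
      ∀ x ∈ uIcc (I.ph w I.c) (I.ph w I.d), ∀ y ∈ uIcc (I.ph w I.c) (I.ph w I.d),
      dist x y < min η₁ η₂ := by
    intro w hw x hx y hy
    rw [Real.dist_eq, abs_sub_comm]
    refine lt_of_le_of_lt (abs_sub_le_of_uIcc_subset_uIcc (uIcc_subset_uIcc hx hy)) ?_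
    rw [abs_sub_comm]
    exact hdiam w hw
  have hsub : ∀ w, Set.uIcc (I.ph w I.c) (I.ph w I.d) ⊆ Icc I.c I.d := fun w =>
    Set.uIcc_subset_Icc (I.ph_maps w I.c_mem) (I.ph_maps w I.d_mem)
  refine ⟨N, ?_, ?_⟩
  · intro w hw
    have hx0 : I.ph w I.c ∈ I.cyl w := ⟨_, I.hcK, rfl⟩
    obtain ⟨n, hn⟩ := (hF.kt _).2 (I.K_sub_Kt (I.cyl_sub _ hx0))
    refine ⟨n, fun x hx => ?_⟩
    obtain ⟨n', hn'⟩ := (hF.kt _).2 (I.K_sub_Kt (I.cyl_sub _ hx))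
    have h3 := uF _ (hsub w (I.cyl_end hx)) _ (hsub w (I.cyl_end hx0))
      ((hclose w hw _ (I.cyl_end hx) _ (I.cyl_end hx0)).trans_le (min_le_right _ _))
    rw [Real.dist_eq, abs_lt] at h3
    have h4 := I.hK hn
    have h5 := I.hK hn'
    have h6 : n' = n := by
      have a1 : (n':ℝ) < n + 1 := by linarith [h4.1, h4.2, h5.1, h5.2, h3.1, h3.2]
      have a2 : (n:ℝ) < n' + 1 := by linarith [h4.1, h4.2, h5.1, h5.2, h3.1, h3.2]
      have a1' : n' < n + 1 := by exact_mod_cast a1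
      have a2' : n < n' + 1 := by exact_mod_cast a2
      omega
    rwa [h6] at hn'
  · intro w hw x hx y hy x' hx' y' hy' hne hne'
    obtain ⟨ξ, hξ, e⟩ := mvt hd hne
    obtain ⟨ξ', hξ', e'⟩ := mvt hd hne'
    have a1 : ξ ∈ uIcc (I.ph w I.c) (I.ph w I.d) :=
      uIcc_subset_uIcc (I.cyl_end hx) (I.cyl_end hy) hξ
    have a2 : ξ' ∈ uIcc (I.ph w I.c) (I.ph w I.d) :=
      uIcc_subset_uIcc (I.cyl_end hx') (I.cyl_end hy') hξ'
    have h3 := ug _ (hsub w a1) _ (hsub w a2) ((hclose w hw _ a1 _ a2).trans_le (min_le_left _ _))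
    rw [Real.dist_eq] at h3
    rw [e, e', abs_mul, abs_mul, Real.log_mul (abs_ne_zero.2 (h2 _))
      (abs_ne_zero.2 (sub_ne_zero.2 hne)), Real.log_mul (abs_ne_zero.2 (h2 _))
      (abs_ne_zero.2 (sub_ne_zero.2 hne'))]
    simpa using h3.le

theorem core (hm : 1 ≤ m) (s : Fin (m+1) → ℝ) (t : Fin m → ℝ) (hs : ∀ i, s i < 0) :
    ∃ δ > 0, ∀ I : IFS m, I.Met s t δ →
      ¬ IsC1Minimal ((fun x : ℝ => ((x : ℝ) : AddCircle (1 : ℝ))) '' I.K) := by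
  obtain ⟨σ, M, p, τ, hC⟩ := exists_Cst s t hs
  have hσ := hC.σpos
  have hτ := hC.τpos
  have hp : (0:ℝ) < 2 * p + 6 := by positivity
  refine ⟨min (min σ 1) (τ / (3 * (2 * p + 6))), by positivity, fun I hM hmin => ?_⟩
  set δ := min (min σ 1) (τ / (3 * (2 * p + 6))) with hδ
  have hδ0 : 0 < δ := by positivity
  have b1 : δ ≤ σ := (min_le_left _ _).trans (min_le_left _ _)
  have b2 : δ ≤ 1 := (min_le_left _ _).trans (min_le_right _ _)
  have b3 : (2 * p + 6) * δ ≤ τ / 3 := by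
    have : δ ≤ τ / (3 * (2 * p + 6)) := min_le_right _ _
    rw [le_div_iff₀ (by positivity)] at this
    linarith
  obtain ⟨F, f, h1, h2, ⟨e, he, h3⟩, h4, -, -, h5, h6⟩ := hmin
  have hF := I.CM_of h1 h2 he h3 h4 h5
  have hMin := I.Min_of hF h4 h6
  obtain ⟨N, hS⟩ := I.Small_of hM hσ hC.hs b1 h1 h2 hF (δ' := min 1 (τ / 3)) (by positivity)
  refine no_min hm hC hM hδ0.le b1 b2 (min_le_left _ _) ?_ hF hS hMin
  have := min_le_right 1 (τ / 3)
  linarith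

theorem Met.mono {I : IFS m} {s s' : Fin (m+1) → ℝ} {t t' : Fin m → ℝ} {δ δ' : ℝ}
    (h : I.Met s t δ) (hs : ∀ i, |s i - s' i| + δ ≤ δ') (ht : ∀ j, |t j - t' j| + δ ≤ δ') :
    I.Met s' t' δ' := by
  constructor
  · intro i w
    have h1 := h.h1 i w
    have h2 := hs i
    have := abs_add_le (I.LP (i :: w) - I.LP w - s i) (s i - s' i)
    rw [sub_add_sub_cancel] at this
    linarith
  · intro w j
    have h1 := h.h2 w j
    have h2 := ht j
    have := abs_add_le (Real.log |I.Bp w j - I.Ap w j| - I.LP w - t j) (t j - t' j)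
    rw [sub_add_sub_cancel] at this
    linarith

theorem core_unif (hm : 1 ≤ m) (σ M : ℝ) (hσ : 0 < σ) :
    ∃ δ > 0, ∀ (s : Fin (m+1) → ℝ) (t : Fin m → ℝ), (∀ i, s i ∈ Icc (-M) (-σ)) →
      (∀ j, t j ∈ Icc (-M) M) → ∀ I : IFS m, I.Met s t δ →
      ¬ IsC1Minimal ((fun x : ℝ => ((x : ℝ) : AddCircle (1 : ℝ))) '' I.K) := by
  have hcomp : IsCompact ((Set.univ.pi fun _ : Fin (m+1) => Icc (-M) (-σ)) ×ˢ
      (Set.univ.pi fun _ : Fin m => Icc (-M) M)) :=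
    (isCompact_univ_pi fun _ => isCompact_Icc).prod (isCompact_univ_pi fun _ => isCompact_Icc)
  have key := hcomp.induction_on (p := fun X : Set ((Fin (m+1) → ℝ) × (Fin m → ℝ)) =>
    ∃ δ > 0, ∀ x ∈ X, ∀ I : IFS m, I.Met x.1 x.2 δ →
      ¬ IsC1Minimal ((fun x : ℝ => ((x : ℝ) : AddCircle (1 : ℝ))) '' I.K))
    ⟨1, one_pos, fun x hx => absurd hx (notMem_empty x)⟩
    (fun X Y hXY ⟨δ, h, h'⟩ => ⟨δ, h, fun x hx => h' x (hXY hx)⟩)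
    (by
      rintro X Y ⟨δ, h, h'⟩ ⟨δ₂, h₂, h₂'⟩
      refine ⟨min δ δ₂, lt_min h h₂, ?_⟩
      rintro x (hx | hx) I hM
      · exact h' x hx I (hM.mono (by simp) (by simp))
      · exact h₂' x hx I (hM.mono (by simp) (by simp)))
    (by
      rintro ⟨s, t⟩ ⟨hs, -⟩
      obtain ⟨δ, hδ, h⟩ := core hm s t fun i => by
        have := (hs i (mem_univ i)).2
        simp only at this
        linarith
      refine ⟨Metric.ball (s, t) (δ / 2), mem_nhdsWithin_of_mem_nhds
        (Metric.ball_mem_nhds _ (by positivity)), δ / 2, by positivity, ?_⟩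
      rintro ⟨s', t'⟩ hx I hM
      rw [Metric.mem_ball, Prod.dist_eq] at hx
      obtain ⟨hx1, hx2⟩ := max_lt_iff.1 hx
      refine h I (hM.mono (fun i => ?_) (fun j => ?_))
      · have := (dist_le_pi_dist s' s i).trans_lt hx1
        rw [Real.dist_eq] at this
        simp only
        linarith
      · have := (dist_le_pi_dist t' t j).trans_lt hx2
        rw [Real.dist_eq] at this
        simp only
        linarith)
  obtain ⟨δ, hδ, h⟩ := key
  exact ⟨δ, hδ, fun s t hs ht I hM => h (s, t) ⟨fun i _ => hs i, fun j _ => ht j⟩ I hM⟩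

end IFS

open Set

theorem mvtOn {S S' : ℝ → ℝ} {α β : ℝ} (h : ∀ x ∈ Icc α β, HasDerivAt S (S' x) x) {x y : ℝ}
    (hx : x ∈ Icc α β) (hy : y ∈ Icc α β) (hne : x ≠ y) :
    ∃ ξ ∈ uIcc x y, S x - S y = S' ξ * (x - y) := by
  wlog hlt : x < y generalizing x y
  · obtain ⟨ξ, h1, h2⟩ := this hy hx hne.symm (lt_of_le_of_ne (not_lt.1 hlt) hne.symm)
    exact ⟨ξ, by rwa [uIcc_comm], by linarith⟩
  have hsub : Icc x y ⊆ Icc α β := Icc_subset_Icc hx.1 hy.2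
  obtain ⟨ξ, h1, h2⟩ := exists_hasDerivAt_eq_slope S S' hlt
    (fun z hz => (h z (hsub hz)).continuousAt.continuousWithinAt)
    (fun z hz => h z (hsub (Ioo_subset_Icc_self hz)))
  refine ⟨ξ, by rw [uIcc_of_le hlt.le]; exact Ioo_subset_Icc_self h1, ?_⟩
  rw [h2]
  field_simp [(sub_pos.2 hlt).ne']
  ring

theorem log_lip {u v : ℝ} (hu : 1 ≤ u) (hv : 1 ≤ v) : |Real.log u - Real.log v| ≤ |u - v| := by
  have key : ∀ u v : ℝ, 1 ≤ u → 1 ≤ v → Real.log u - Real.log v ≤ |u - v| := by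
    intro u v hu hv
    rw [← Real.log_div (by linarith) (by linarith)]
    have h1 := Real.log_le_sub_one_of_pos (x := u / v) (by positivity)
    have h2 : u / v - 1 = (u - v) / v := by field_simp
    have h3 : (u - v) / v ≤ |u - v| := by
      rw [div_le_iff₀ (by linarith)]
      nlinarith [le_abs_self (u - v), abs_nonneg (u - v)]
    linarith
  rw [abs_le]
  have h1 := key u v hu hv
  have h2 := key v u hv hu
  rw [abs_sub_comm] at h2
  constructor <;> linarith

theorem branch {S S' S'' : ℝ → ℝ} {α β c d r ε : ℝ}
    (h1 : ∀ x ∈ Icc α β, HasDerivAt S (S' x) x) (h2 : ∀ x ∈ Icc α β, HasDerivAt S' (S'' x) x)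
    (h3 : ∀ x ∈ Icc α β, 1 < |S' x|) (h4 : ∀ x ∈ Icc α β, |S'' x| ≤ ε)
    (h5 : S '' Icc α β = Icc c d) (hr0 : 0 < r) (hr : r ≤ β - α) (hr' : β - α + r ≤ d - c)
    (hcd : c < d) (hcd1 : d - c ≤ 1) (hε : ε ≤ r / 2) :
    ∃ φ : ℝ → ℝ, (∀ y ∈ Icc c d, φ y ∈ Icc α β ∧ S (φ y) = y) ∧
      (∀ x ∈ Icc α β, φ (S x) = x) ∧
      (∀ x ∈ Icc c d, ∀ y ∈ Icc c d, (1 + r / 2) * |φ x - φ y| ≤ |x - y| ∧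
        |x - y| ≤ (1 / r + 1) * |φ x - φ y|) ∧
      ContinuousOn φ (Icc c d) ∧
      (StrictMonoOn φ (Icc c d) ∨ StrictAntiOn φ (Icc c d)) ∧
      ∀ e1 ∈ Icc c d, ∀ e2 ∈ Icc c d, ∀ x ∈ uIcc e1 e2, ∀ y ∈ uIcc e1 e2,
        ∀ x' ∈ uIcc e1 e2, ∀ y' ∈ uIcc e1 e2, x ≠ y → x' ≠ y' →
        |(Real.log |φ x - φ y| - Real.log |x - y|) -
          (Real.log |φ x' - φ y'| - Real.log |x' - y'|)| ≤ ε * |e1 - e2| := by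
  have hαβ : α < β := by linarith
  have hε0 : 0 ≤ ε := (abs_nonneg _).trans (h4 α ⟨le_rfl, hαβ.le⟩)
  have hL : ∀ x ∈ Icc α β, ∀ y ∈ Icc α β, |S' x - S' y| ≤ ε * |x - y| := by
    intro x hx y hy
    rcases eq_or_ne x y with rfl | hne
    · simp
    · obtain ⟨ξ, hξ, e⟩ := mvtOn h2 hx hy hne
      rw [e, abs_mul]
      exact mul_le_mul_of_nonneg_right (h4 ξ (uIcc_subset_Icc hx hy hξ)) (abs_nonneg _)
  have hlen : ∀ x ∈ Icc α β, ∀ y ∈ Icc α β, |x - y| ≤ β - α := by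
    intro x hx y hy
    rw [abs_le]; constructor <;> linarith [hx.1, hx.2, hy.1, hy.2]
  have hL1 : ∀ x ∈ Icc α β, ∀ y ∈ Icc α β, |S' x - S' y| ≤ r / 2 := by
    intro x hx y hy
    have a1 := hL x hx y hy
    have a2 := hlen x hx y hy
    have a3 : ε * |x - y| ≤ ε * 1 := mul_le_mul_of_nonneg_left (by linarith) hε0
    linarith
  have hlo : ∀ x ∈ Icc α β, 1 + r / 2 ≤ |S' x| := by
    intro x hx
    obtain ⟨p, hp, hpc⟩ : c ∈ S '' Icc α β := by rw [h5]; exact ⟨le_rfl, hcd.le⟩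
    obtain ⟨q, hq, hqd⟩ : d ∈ S '' Icc α β := by rw [h5]; exact ⟨hcd.le, le_rfl⟩
    have hpq : p ≠ q := by rintro rfl; exact hcd.ne (hpc.symm.trans hqd)
    obtain ⟨ξ, hξ, e⟩ := mvtOn h1 hp hq hpq
    have hξ' := uIcc_subset_Icc hp hq hξ
    have e2 : d - c = |S' ξ| * |p - q| := by
      rw [← abs_mul, ← e, hpc, hqd, abs_sub_comm, abs_of_pos (by linarith)]
    have a1 := hlen p hp q hq
    have a2 := hL1 ξ hξ' x hx
    have a3 := abs_sub_abs_le_abs_sub (S' ξ) (S' x)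
    have a4 : 1 + r ≤ |S' ξ| := by
      by_contra hlt
      push Not at hlt
      have b1 : |S' ξ| * |p - q| ≤ (1 + r) * (β - α) := by
        apply mul_le_mul hlt.le a1 (abs_nonneg _) (by linarith)
      nlinarith
    linarith
  have hhi : ∀ x ∈ Icc α β, |S' x| ≤ 1 / r + 1 := by
    intro x hx
    obtain ⟨ξ, hξ, e⟩ := mvtOn h1 (x := α) (y := β) ⟨le_rfl, hαβ.le⟩ ⟨hαβ.le, le_rfl⟩ hαβ.ne
    rw [uIcc_of_le hαβ.le] at hξ
    have m1 : S α ∈ Icc c d := by rw [← h5]; exact ⟨α, ⟨le_rfl, hαβ.le⟩, rfl⟩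
    have m2 : S β ∈ Icc c d := by rw [← h5]; exact ⟨β, ⟨hαβ.le, le_rfl⟩, rfl⟩
    have e2 : |S' ξ| * |α - β| ≤ 1 := by
      rw [← abs_mul, ← e, abs_le]
      constructor <;> linarith [m1.1, m1.2, m2.1, m2.2]
    have e3 : |α - β| = β - α := by rw [abs_sub_comm, abs_of_pos (by linarith)]
    rw [e3] at e2
    have a1 : |S' ξ| ≤ 1 / r := by
      rw [le_div_iff₀ hr0]
      nlinarith [abs_nonneg (S' ξ)]
    have a2 := hL1 x hx ξ hξ
    have a3 := abs_sub_abs_le_abs_sub (S' x) (S' ξ)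
    linarith
  have hinv : ∀ y, ∃ x, y ∈ Icc c d → x ∈ Icc α β ∧ S x = y := by
    intro y
    by_cases hy : y ∈ Icc c d
    · have hy' := hy
      rw [← h5] at hy'
      obtain ⟨x, hx, e⟩ := hy'
      exact ⟨x, fun _ => ⟨hx, e⟩⟩
    · exact ⟨0, fun h => absurd h hy⟩
  choose φ hφ using hinv
  have hinj : ∀ x ∈ Icc α β, ∀ y ∈ Icc α β, S x = S y → x = y := by
    intro x hx y hy e
    by_contra hne
    obtain ⟨ξ, hξ, e'⟩ := mvtOn h1 hx hy hne
    rw [e, sub_self] at e'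
    have := hlo ξ (uIcc_subset_Icc hx hy hξ)
    rcases mul_eq_zero.1 e'.symm with h | h
    · rw [h, abs_zero] at this; linarith
    · exact hne (sub_eq_zero.1 h)
  have hmv : ∀ x ∈ Icc c d, ∀ y ∈ Icc c d, x ≠ y → φ x ≠ φ y ∧ ∃ ξ ∈ uIcc (φ x) (φ y),
      |x - y| = |S' ξ| * |φ x - φ y| := by
    intro x hx y hy hne
    have hne' : φ x ≠ φ y := fun e => hne (by rw [← (hφ x hx).2, ← (hφ y hy).2, e])
    obtain ⟨ξ, hξ, e⟩ := mvtOn h1 (hφ x hx).1 (hφ y hy).1 hne'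
    refine ⟨hne', ξ, hξ, ?_⟩
    rw [(hφ x hx).2, (hφ y hy).2] at e
    rw [e, abs_mul]
  have hbi : ∀ x ∈ Icc c d, ∀ y ∈ Icc c d, (1 + r / 2) * |φ x - φ y| ≤ |x - y| ∧
        |x - y| ≤ (1 / r + 1) * |φ x - φ y| := by
    intro x hx y hy
    rcases eq_or_ne x y with rfl | hne
    · simp
    · obtain ⟨-, ξ, hξ, e⟩ := hmv x hx y hy hne
      have hξ' := uIcc_subset_Icc (hφ x hx).1 (hφ y hy).1 hξ
      rw [e]
      exact ⟨mul_le_mul_of_nonneg_right (hlo _ hξ') (abs_nonneg _),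
        mul_le_mul_of_nonneg_right (hhi _ hξ') (abs_nonneg _)⟩
  have hle : ∀ x ∈ Icc c d, ∀ y ∈ Icc c d, |φ x - φ y| ≤ |x - y| := by
    intro x hx y hy
    have := (hbi x hx y hy).1
    nlinarith [abs_nonneg (φ x - φ y)]
  have hcont : ContinuousOn φ (Icc c d) := by
    rw [Metric.continuousOn_iff]
    intro y hy η hη
    refine ⟨η, hη, fun x hx hxy => ?_⟩
    rw [Real.dist_eq] at *
    exact (hle x hx y hy).trans_lt hxy
  have hmono : StrictMonoOn φ (Icc c d) ∨ StrictAntiOn φ (Icc c d) := by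
    refine hcont.strictMonoOn_of_injOn_Icc' hcd.le ?_
    intro x hx y hy e
    by_contra hne
    exact (hmv x hx y hy hne).1 e
  refine ⟨φ, hφ, ?_, hbi, hcont, hmono, ?_⟩
  · intro x hx
    have hS : S x ∈ Icc c d := by rw [← h5]; exact ⟨x, hx, rfl⟩
    exact hinj _ (hφ _ hS).1 _ hx (hφ _ hS).2
  · intro e1 he1 e2 he2 x hx y hy x' hx' y' hy' hne hne'
    have hs := uIcc_subset_Icc he1 he2
    obtain ⟨n1, ξ, hξ, e⟩ := hmv x (hs hx) y (hs hy) hne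
    obtain ⟨n2, ξ', hξ', e'⟩ := hmv x' (hs hx') y' (hs hy') hne'
    have im : ∀ z ∈ uIcc e1 e2, φ z ∈ uIcc (φ e1) (φ e2) := fun z hz =>
      (uIcc_image_iff hmono he1 he2 (hs hz)).2 hz
    have k1 : ξ ∈ uIcc (φ e1) (φ e2) := uIcc_subset_uIcc (im x hx) (im y hy) hξ
    have k2 : ξ' ∈ uIcc (φ e1) (φ e2) := uIcc_subset_uIcc (im x' hx') (im y' hy') hξ'
    have hs' := uIcc_subset_Icc (hφ e1 he1).1 (hφ e2 he2).1
    have p1 := h3 ξ (hs' k1)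
    have p2 := h3 ξ' (hs' k2)
    have q1 : Real.log |x - y| = Real.log |S' ξ| + Real.log |φ x - φ y| := by
      rw [e, Real.log_mul (by linarith) (abs_ne_zero.2 (sub_ne_zero.2 n1))]
    have q2 : Real.log |x' - y'| = Real.log |S' ξ'| + Real.log |φ x' - φ y'| := by
      rw [e', Real.log_mul (by linarith) (abs_ne_zero.2 (sub_ne_zero.2 n2))]
    have c1 := log_lip p2.le p1.le
    have c2 := abs_abs_sub_abs_le (S' ξ') (S' ξ)
    have c3 := hL ξ' (hs' k2) ξ (hs' k1)
    have c4 : |ξ' - ξ| ≤ |e1 - e2| := by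
      have := abs_sub_le_of_uIcc_subset_uIcc (uIcc_subset_uIcc k1 k2)
      refine this.trans ?_
      rw [abs_sub_comm]
      exact hle e1 he1 e2 he2
    have c5 := mul_le_mul_of_nonneg_left c4 hε0
    rw [q1, q2]
    have : Real.log |φ x - φ y| - (Real.log |S' ξ| + Real.log |φ x - φ y|) -
        (Real.log |φ x' - φ y'| - (Real.log |S' ξ'| + Real.log |φ x' - φ y'|)) =
        Real.log |S' ξ'| - Real.log |S' ξ| := by ring
    rw [this]
    linarith

namespace IFS

variable {m : ℕ} (I : IFS m)

theorem dist_ph {ε ρ : ℝ} (hε : 0 ≤ ε) (hρ0 : 0 ≤ ρ) (hρ : ρ < 1)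
    (hcon : ∀ i, ∀ x ∈ Icc I.c I.d, ∀ y ∈ Icc I.c I.d, |I.φ i x - I.φ i y| ≤ ρ * |x - y|)
    (hdis : ∀ i, ∀ e1 ∈ Icc I.c I.d, ∀ e2 ∈ Icc I.c I.d, ∀ x ∈ uIcc e1 e2, ∀ y ∈ uIcc e1 e2,
        ∀ x' ∈ uIcc e1 e2, ∀ y' ∈ uIcc e1 e2, x ≠ y → x' ≠ y' →
        |(Real.log |I.φ i x - I.φ i y| - Real.log |x - y|) -
          (Real.log |I.φ i x' - I.φ i y'| - Real.log |x' - y'|)| ≤ ε * |e1 - e2|)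
    (w : List (Fin (m+1))) : ∀ e1 ∈ Icc I.c I.d, ∀ e2 ∈ Icc I.c I.d, ∀ x ∈ uIcc e1 e2,
        ∀ y ∈ uIcc e1 e2, ∀ x' ∈ uIcc e1 e2, ∀ y' ∈ uIcc e1 e2, x ≠ y → x' ≠ y' →
        |(Real.log |I.ph w x - I.ph w y| - Real.log |x - y|) -
          (Real.log |I.ph w x' - I.ph w y'| - Real.log |x' - y'|)| ≤ ε / (1 - ρ) * |e1 - e2| := by
  have hC : 0 ≤ ε / (1 - ρ) := div_nonneg hε (by linarith)
  induction w with
  | nil =>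
    intro e1 he1 e2 he2 x hx y hy x' hx' y' hy' hne hne'
    simp only [ph_nil, sub_self, abs_zero]
    positivity
  | cons i w ih =>
    intro e1 he1 e2 he2 x hx y hy x' hx' y' hy' hne hne'
    have hs := uIcc_subset_Icc he1 he2
    have im : ∀ z ∈ uIcc e1 e2, I.φ i z ∈ uIcc (I.φ i e1) (I.φ i e2) := fun z hz =>
      (uIcc_image_iff (I.φ_mono i) he1 he2 (hs hz)).2 hz
    have hinj : InjOn (I.φ i) (Icc I.c I.d) := I.ph_inj [i]
    have a1 := ih _ (I.φ_maps he1) _ (I.φ_maps he2) _ (im x hx) _ (im y hy) _ (im x' hx') _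
      (im y' hy') (fun e => hne (hinj (hs hx) (hs hy) e))
      (fun e => hne' (hinj (hs hx') (hs hy') e))
    have a2 := hdis i e1 he1 e2 he2 x hx y hy x' hx' y' hy' hne hne'
    have a3 := mul_le_mul_of_nonneg_left (hcon i e1 he1 e2 he2) hC
    have a4 : ε / (1 - ρ) * (ρ * |e1 - e2|) + ε * |e1 - e2| = ε / (1 - ρ) * |e1 - e2| := by
      have : 1 - ρ ≠ 0 := by linarith
      field_simp
      ring
    simp only [ph_cons]
    rw [abs_le] at *
    constructor <;> linarith [a1.1, a1.2, a2.1, a2.2]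

theorem Met_of_dist {ε ρ : ℝ} (hε : 0 ≤ ε) (hρ0 : 0 ≤ ρ) (hρ : ρ < 1)
    (hcon : ∀ i, ∀ x ∈ Icc I.c I.d, ∀ y ∈ Icc I.c I.d, |I.φ i x - I.φ i y| ≤ ρ * |x - y|)
    (hdis : ∀ i, ∀ e1 ∈ Icc I.c I.d, ∀ e2 ∈ Icc I.c I.d, ∀ x ∈ uIcc e1 e2, ∀ y ∈ uIcc e1 e2,
        ∀ x' ∈ uIcc e1 e2, ∀ y' ∈ uIcc e1 e2, x ≠ y → x' ≠ y' →
        |(Real.log |I.φ i x - I.φ i y| - Real.log |x - y|) -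
          (Real.log |I.φ i x' - I.φ i y'| - Real.log |x' - y'|)| ≤ ε * |e1 - e2|) :
    I.Met (fun i => Real.log |I.φ i I.c - I.φ i I.d| - Real.log |I.c - I.d|)
      (fun j => Real.log |I.b j.castSucc - I.a j.succ| - Real.log |I.c - I.d|)
      (ε / (1 - ρ)) := by
  have hC : 0 ≤ ε / (1 - ρ) := div_nonneg hε (by linarith)
  have hl : |I.c - I.d| ≤ 1 := by
    rw [abs_le]; constructor <;> linarith [I.hcd, I.hc0, I.hd1]
  have hl' := mul_le_mul_of_nonneg_left hl hC
  rw [mul_one] at hl'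
  have hu : ∀ x ∈ Icc I.c I.d, x ∈ uIcc I.c I.d := fun x hx => by rwa [uIcc_of_le I.hcd.le]
  have key := fun w x hx y hy hne => (I.dist_ph hε hρ0 hρ hcon hdis w I.c I.c_mem I.d I.d_mem x
    (hu x hx) y (hu y hy) I.c (hu _ I.c_mem) I.d (hu _ I.d_mem) hne I.hcd.ne).trans hl'
  constructor
  · intro i w
    have := key w _ (I.φ_maps (i := i) I.c_mem) _ (I.φ_maps (i := i) I.d_mem)
      (fun e => I.hcd.ne (I.ph_inj [i] I.c_mem I.d_mem e))
    refine le_of_eq_of_le (congrArg _ ?_) this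
    unfold LP
    simp only [ph_cons]
    ring
  · intro w j
    have := key w _ (I.hK (I.bK j.castSucc)) _ (I.hK (I.aK j.succ)) (I.hord j).ne
    refine le_of_eq_of_le (congrArg _ ?_) this
    unfold LP Bp Ap
    ring

end IFS

open Set

theorem sorted_case {m : ℕ} (hm : 1 ≤ m) (a b : Fin (m+1) → ℝ) (hab : ∀ j, a j < b j)
    (hord : ∀ j : Fin m, b j.castSucc < a j.succ)
    (c d : ℝ) (hcd : c < d) (hc : 0 ≤ c) (hd : d < 1)
    (hsub : (⋃ j, Icc (a j) (b j)) ⊆ Icc c d) :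
    ∃ ε > 0, ∀ S S' S'' : ℝ → ℝ,
      (∀ x ∈ ⋃ j, Icc (a j) (b j), HasDerivAt S (S' x) x) →
      (∀ x ∈ ⋃ j, Icc (a j) (b j), HasDerivAt S' (S'' x) x) →
      (∀ x ∈ ⋃ j, Icc (a j) (b j), 1 < |S' x|) →
      (∀ j, S '' Icc (a j) (b j) = Icc c d) →
      (∀ x ∈ ⋃ j, Icc (a j) (b j), |S'' x| ≤ ε) →
      ¬ IsC1Minimal ((fun x : ℝ => ((x : ℝ) : AddCircle (1 : ℝ))) ''
        {x ∈ ⋃ j, Icc (a j) (b j) | ∀ n : ℕ, S^[n] x ∈ ⋃ j, Icc (a j) (b j)}) := by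
  set U := ⋃ j, Icc (a j) (b j) with hU
  have memU : ∀ j, ∀ x ∈ Icc (a j) (b j), x ∈ U := fun j x hx => mem_iUnion.2 ⟨j, hx⟩
  have haU : ∀ j, a j ∈ Icc c d := fun j => hsub (memU j _ ⟨le_rfl, (hab j).le⟩)
  have hbU : ∀ j, b j ∈ Icc c d := fun j => hsub (memU j _ ⟨(hab j).le, le_rfl⟩)
  -- a uniform lower bound for lengths of intervals and gaps
  obtain ⟨r, hr0, hr1, hr2⟩ : ∃ r > 0, (∀ i, r ≤ b i - a i) ∧
      ∀ j : Fin m, r ≤ a j.succ - b j.castSucc := by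
    obtain ⟨i0, hi0⟩ := Finite.exists_min (fun i => b i - a i)
    have : Nonempty (Fin m) := ⟨⟨0, hm⟩⟩
    obtain ⟨j0, hj0⟩ := Finite.exists_min (fun j : Fin m => a j.succ - b j.castSucc)
    refine ⟨min (b i0 - a i0) (a j0.succ - b j0.castSucc),
      lt_min (by linarith [hab i0]) (by linarith [hord j0]),
      fun i => (min_le_left _ _).trans (hi0 i), fun j => (min_le_right _ _).trans (hj0 j)⟩
  have hr3 : ∀ i, b i - a i + r ≤ d - c := by
    intro i
    induction i using Fin.lastCases with
    | last =>
      have h1 := hr2 ⟨m - 1, by omega⟩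
      have h2 : (⟨m - 1, by omega⟩ : Fin m).succ = Fin.last m := by
        ext; simp; omega
      rw [h2] at h1
      linarith [(hbU (Fin.last m)).2, (hbU (⟨m - 1, by omega⟩ : Fin m).castSucc).1]
    | cast j =>
      have h1 := hr2 j
      linarith [(haU j.castSucc).1, (haU j.succ).2]
  have hrlt : r < 1 := by linarith [hr1 0, hr3 0]
  set ρ : ℝ := 1 / (1 + r / 2) with hρ
  have hρ0 : 0 < ρ := by positivity
  have hρ1 : ρ < 1 := by rw [hρ, div_lt_one (by positivity)]; linarith
  have hσ : 0 < -Real.log ρ := by linarith [Real.log_neg hρ0 hρ1]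
  set M : ℝ := max (Real.log (1 / r + 1)) (-Real.log r) with hM
  obtain ⟨δ, hδ, hcore⟩ := IFS.core_unif hm (-Real.log ρ) M hσ
  refine ⟨min (r / 2) (δ * (1 - ρ)), lt_min (by positivity) (mul_pos hδ (by linarith)), ?_⟩
  intro S S' S'' h1 h2 h3 h4 h5 hmin
  set ε := min (r / 2) (δ * (1 - ρ)) with hε
  have hεr : ε ≤ r / 2 := min_le_left _ _
  have hε0 : 0 ≤ ε := le_min (by positivity) (mul_nonneg hδ.le (by linarith))
  have hbr := fun i => branch (fun x hx => h1 x (memU i x hx)) (fun x hx => h2 x (memU i x hx))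
    (fun x hx => h3 x (memU i x hx)) (fun x hx => h5 x (memU i x hx)) (h4 i) hr0 (hr1 i) (hr3 i)
    hcd (by linarith) hεr
  choose φ f1 f2 f3 f4 f5 f6 using hbr
  set K := {x ∈ U | ∀ n : ℕ, S^[n] x ∈ U} with hKdef
  have hKsub : K ⊆ Icc c d := fun x hx => hsub hx.1
  have hKeq : K = ⋃ i, φ i '' K := by
    ext x
    constructor
    · intro hx
      obtain ⟨i, hi⟩ := mem_iUnion.1 hx.1
      refine mem_iUnion.2 ⟨i, S x, ⟨hx.2 1, fun n => ?_⟩, f2 i x hi⟩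
      have := hx.2 (n + 1)
      rwa [Function.iterate_succ_apply] at this
    · intro hx
      obtain ⟨i, y, hy, rfl⟩ := mem_iUnion.1 hx
      have hi := f1 i y (hKsub hy)
      refine ⟨memU i _ hi.1, fun n => ?_⟩
      cases n with
      | zero => exact memU i _ hi.1
      | succ n => rw [Function.iterate_succ_apply, hi.2]; exact hy.2 n
  have hKclosed : IsClosed K := by
    obtain ⟨F, f, -, -, -, -, hcl, -⟩ := hmin
    have e : K = Icc c d ∩ (fun x : ℝ => ((x : ℝ) : AddCircle (1 : ℝ))) ⁻¹'
        ((fun x : ℝ => ((x : ℝ) : AddCircle (1 : ℝ))) '' K) := by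
      ext x
      constructor
      · exact fun hx => ⟨hKsub hx, x, hx, rfl⟩
      · rintro ⟨hx, y, hy, e⟩
        obtain ⟨n, hn⟩ := circle_eq (x := y) (y := x) e
        have hy' := hKsub hy
        have a1 : (n:ℝ) < 1 := by linarith [hx.1, hx.2, hy'.1, hy'.2]
        have a2 : (-1:ℝ) < n := by linarith [hx.1, hx.2, hy'.1, hy'.2]
        have a1' : n < 1 := by exact_mod_cast a1
        have a2' : -1 < n := by exact_mod_cast a2
        have : n = 0 := by omega
        rw [this, Int.cast_zero, add_zero] at hn
        rwa [← hn]
    rw [e]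
    exact isClosed_Icc.inter (hcl.preimage (AddCircle.continuous_mk' (1:ℝ)))
  have hKne : K.Nonempty := by
    obtain ⟨F, f, -, -, -, -, -, hne, -⟩ := hmin
    exact Set.image_nonempty.1 hne
  have hKc : IsCompact K := isCompact_Icc.of_isClosed_subset hKclosed hKsub
  obtain ⟨c', hc'⟩ := hKc.exists_isLeast hKne
  obtain ⟨d', hd'⟩ := hKc.exists_isGreatest hKne
  have φK : ∀ i, ∀ x ∈ K, φ i x ∈ K := fun i x hx => by
    rw [hKeq]; exact mem_iUnion.2 ⟨i, x, hx, rfl⟩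
  have hcd' : c' < d' := by
    obtain ⟨y, hy⟩ := hKne
    have p1 := f1 (⟨0, hm⟩ : Fin m).castSucc y (hKsub hy)
    have p2 := f1 (⟨0, hm⟩ : Fin m).succ y (hKsub hy)
    have p3 := hord ⟨0, hm⟩
    have p4 := hc'.2 (φK (⟨0, hm⟩ : Fin m).castSucc y hy)
    have p5 := hd'.2 (φK (⟨0, hm⟩ : Fin m).succ y hy)
    linarith [p1.1.2, p2.1.1]
  have mc := hKsub hc'.1
  have md := hKsub hd'.1
  have hss : Icc c' d' ⊆ Icc c d := Icc_subset_Icc mc.1 md.2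
  let I : IFS m :=
    { c := c', d := d'
      a := fun i => min (φ i c') (φ i d')
      b := fun i => max (φ i c') (φ i d')
      φ := φ, K := K
      hcd := hcd'
      hc0 := hc.trans mc.1
      hd1 := md.2.trans_lt hd
      hKc := hKc
      hcK := hc'.1
      hdK := hd'.1
      hK := fun x hx => ⟨hc'.2 hx, hd'.2 hx⟩
      hcont := fun i => (f4 i).mono hss
      hmono := fun i => by
        rcases f5 i with h | h
        · have := h mc md hcd'
          exact Or.inl ⟨h.mono hss, (min_eq_left this.le).symm, (max_eq_right this.le).symm⟩
        · have := h mc md hcd'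
          exact Or.inr ⟨h.mono hss, (max_eq_left this.le).symm, (min_eq_right this.le).symm⟩
      hKeq := hKeq
      hord := fun j => by
        have p1 := (f1 j.castSucc c' mc).1
        have p2 := (f1 j.castSucc d' md).1
        have p3 := (f1 j.succ c' mc).1
        have p4 := (f1 j.succ d' md).1
        exact (max_le p1.2 p2.2).trans_lt ((hord j).trans_le (le_min p3.1 p4.1)) }
  have hcon : ∀ i, ∀ x ∈ Icc c d, ∀ y ∈ Icc c d, |φ i x - φ i y| ≤ ρ * |x - y| := by
    intro i x hx y hy
    have := (f3 i x hx y hy).1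
    rw [hρ, one_div, ← div_eq_inv_mul, le_div_iff₀ (by positivity)]
    linarith
  have hMet := I.Met_of_dist hε0 hρ0.le hρ1 (fun i x hx y hy => hcon i x (hss hx) y (hss hy))
    (fun i e1 h e2 h' => f6 i e1 (hss h) e2 (hss h'))
  have hεδ : ε / (1 - ρ) ≤ δ := by
    rw [div_le_iff₀ (by linarith)]; exact min_le_right _ _
  have habs : |c' - d'| = d' - c' := by rw [abs_sub_comm, abs_of_pos (by linarith)]
  have hpos : 0 < |c' - d'| := by rw [habs]; linarith
  have hle1 : |c' - d'| ≤ 1 := by rw [habs]; linarith [mc.1, md.2]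
  have hMet' := hMet.mono (s' := fun i => Real.log |I.φ i I.c - I.φ i I.d| - Real.log |I.c - I.d|)
    (t' := fun j => Real.log |I.b j.castSucc - I.a j.succ| - Real.log |I.c - I.d|) (δ' := δ)
    (fun i => by rw [sub_self, abs_zero, zero_add]; exact hεδ)
    (fun j => by rw [sub_self, abs_zero, zero_add]; exact hεδ)
  refine hcore _ _ (fun i => ?_) (fun j => ?_) I hMet' hmin
  · change Real.log |φ i c' - φ i d'| - Real.log |c' - d'| ∈ _
    have q1 := hcon i c' mc d' md
    have q2 := (f3 i c' mc d' md).2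
    have hΛ : 0 < 1 / r + 1 := by positivity
    have q3 : 0 < |φ i c' - φ i d'| := by
      by_contra hq
      have : |φ i c' - φ i d'| ≤ 0 := not_lt.1 hq
      nlinarith
    have q4 := Real.log_le_log q3 q1
    have q5 := Real.log_le_log hpos q2
    rw [Real.log_mul hρ0.ne' hpos.ne'] at q4
    rw [Real.log_mul hΛ.ne' q3.ne'] at q5
    have q6 : Real.log (1 / r + 1) ≤ M := le_max_left _ _
    constructor <;> linarith
  · change Real.log |max (φ j.castSucc c') (φ j.castSucc d') -
      min (φ j.succ c') (φ j.succ d')| - Real.log |c' - d'| ∈ _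
    have p1 := (f1 j.castSucc c' mc).1
    have p2 := (f1 j.castSucc d' md).1
    have p3 := (f1 j.succ c' mc).1
    have p4 := (f1 j.succ d' md).1
    have b1 := max_le p1.2 p2.2
    have b2 := le_min p3.1 p4.1
    have b3 : c' ≤ max (φ j.castSucc c') (φ j.castSucc d') :=
      (hc'.2 (φK j.castSucc c' hc'.1)).trans (le_max_left _ _)
    have b4 : min (φ j.succ c') (φ j.succ d') ≤ d' :=
      (min_le_left _ _).trans (hd'.2 (φK j.succ c' hc'.1))
    set X := max (φ j.castSucc c') (φ j.castSucc d')
    set Y := min (φ j.succ c') (φ j.succ d')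
    have hj := hr2 j
    have hXY : |X - Y| = Y - X := by rw [abs_sub_comm, abs_of_pos (by linarith)]
    have g1 : r ≤ |X - Y| := by rw [hXY]; linarith
    have g2 : |X - Y| ≤ |c' - d'| := by rw [hXY, habs]; linarith
    have l1 := Real.log_le_log hr0 g1
    have l2 := Real.log_le_log (by linarith) g2
    have l3 := Real.log_nonpos hpos.le hle1
    have l4 : -Real.log r ≤ M := le_max_right _ _
    have l5 := Real.log_nonpos hr0.le hrlt.le
    constructor <;> linarith


end Aux

/-- Corollary: There exists ε > 0 such that for all
A, S ∈ S²(I,L) with A locally affine and ‖S − A‖_{C²} < ε, the maximal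
invariant Cantor set C_S is not C¹-minimal. -/
theorem corollary_nearly_affine_not_C1_minimal
    (k : ℕ) (hk : 2 ≤ k) (a b : Fin k → ℝ) (hab : ∀ j, a j < b j)
    (c d : ℝ) (hcd : c < d) (hc : 0 ≤ c) (hd : d < 1)
    (hdisj : ∀ i j : Fin k, i ≠ j →
      Disjoint (Set.Icc (a i) (b i)) (Set.Icc (a j) (b j)))
    (hsub : (⋃ j, Set.Icc (a j) (b j)) ⊆ Set.Icc c d) :
    ∃ ε > 0, ∀ A A' A'' S S' S'' : ℝ → ℝ,
      (∀ x ∈ ⋃ j, Set.Icc (a j) (b j), HasDerivAt A (A' x) x) →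
      (∀ x ∈ ⋃ j, Set.Icc (a j) (b j), HasDerivAt A' (A'' x) x) →
      ContinuousOn A'' (⋃ j, Set.Icc (a j) (b j)) →
      (∀ x ∈ ⋃ j, Set.Icc (a j) (b j), 1 < |A' x|) →
      (∀ j, A '' Set.Icc (a j) (b j) = Set.Icc c d) →
      (∀ j : Fin k, ∀ x ∈ Set.Icc (a j) (b j), A'' x = 0) →
      (∀ x ∈ ⋃ j, Set.Icc (a j) (b j), HasDerivAt S (S' x) x) →
      (∀ x ∈ ⋃ j, Set.Icc (a j) (b j), HasDerivAt S' (S'' x) x) →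
      ContinuousOn S'' (⋃ j, Set.Icc (a j) (b j)) →
      (∀ x ∈ ⋃ j, Set.Icc (a j) (b j), 1 < |S' x|) →
      (∀ j, S '' Set.Icc (a j) (b j) = Set.Icc c d) →
      (∀ x ∈ ⋃ j, Set.Icc (a j) (b j),
        |S x - A x| + |S' x - A' x| + |S'' x - A'' x| < ε) →
      ¬ IsC1Minimal ((fun x : ℝ => ((x : ℝ) : AddCircle (1 : ℝ))) ''
        {x ∈ ⋃ j, Set.Icc (a j) (b j) |
          ∀ n : ℕ, S^[n] x ∈ ⋃ j, Set.Icc (a j) (b j)}) := by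
  obtain ⟨m, rfl⟩ : ∃ m, k = m + 1 := ⟨k - 1, by omega⟩
  have hm : 1 ≤ m := by omega
  set σ := Tuple.sort a with hσ
  have hmono : Monotone (a ∘ σ) := Tuple.monotone_sort a
  have hU : (⋃ j, Set.Icc (a (σ j)) (b (σ j))) = ⋃ j, Set.Icc (a j) (b j) :=
    σ.surjective.iUnion_comp (fun j => Set.Icc (a j) (b j))
  have hord : ∀ j : Fin m, b (σ j.castSucc) < a (σ j.succ) := by
    intro j
    have h1 : a (σ j.castSucc) ≤ a (σ j.succ) := hmono (Fin.castSucc_lt_succ).le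
    have hne : σ j.castSucc ≠ σ j.succ := fun e =>
      (Fin.castSucc_lt_succ (i := j)).ne (σ.injective e)
    by_contra hlt
    exact Set.disjoint_left.1 (hdisj _ _ hne) ⟨h1, not_lt.1 hlt⟩ ⟨le_rfl, (hab _).le⟩
  obtain ⟨ε, hε, h⟩ := sorted_case hm (fun j => a (σ j)) (fun j => b (σ j)) (fun j => hab _) hord
    c d hcd hc hd (by rw [hU]; exact hsub)
  refine ⟨ε, hε, fun A A' A'' S S' S'' _ _ _ _ _ hA0 hS1 hS2 _ hS3 hS4 hclose => ?_⟩
  have h' := h S S' S'' (by rw [hU]; exact hS1) (by rw [hU]; exact hS2) (by rw [hU]; exact hS3)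
    (fun j => hS4 _) (by
      rw [hU]
      intro x hx
      have h1 := hclose x hx
      obtain ⟨j, hj⟩ := Set.mem_iUnion.1 hx
      rw [hA0 j x hj, sub_zero] at h1
      linarith [abs_nonneg (S x - A x), abs_nonneg (S' x - A' x)])
  rw [hU] at h'
  exact h'
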